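/- Fix real κ > 0 and η > 0, and let a, b be real with 0 < a < b/2. For f > 0 let J(f) denote the number of zeros of D_f, counted with multiplicity (each zero weighted by its order of vanishing), lying in the set {z ∈ ℂ : a ≤ Re z ≤ b, Im z < 0}. Then J(f) is finite for all sufficiently small f > 0 and 0 < liminf_{f→0⁺} f·J(f) ≤ limsup_{f→0⁺} f·J(f) < ∞. -/

import Mathlib

open Real
open scoped ENNReal

/-- Taylor coefficients of the Airy function `Ai`:
`a₀ = 3^{−2/3}/Γ(2/3)`, `a₁ = −3^{−1/3}/Γ(1/3)`, `a₂ = 0`,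
`a_{k+3} = a_k/((k+3)(k+2))`. -/
noncomputable def airyCoeff : ℕ → ℂ
  | 0 => (3 : ℂ) ^ (-(2 : ℂ) / 3) / Complex.Gamma (2 / 3)
  | 1 => -((3 : ℂ) ^ (-(1 : ℂ) / 3) / Complex.Gamma (1 / 3))
  | 2 => 0
  | (k + 3) => airyCoeff k / (((k : ℂ) + 3) * ((k : ℂ) + 2))

/-- The Airy function `Ai`, as the entire function with the above Taylor
coefficients at `0`. -/
noncomputable def Ai (z : ℂ) : ℂ := ∑' k : ℕ, airyCoeff k * z ^ k

/-- `ω = e^{2πi/3}` -/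
noncomputable def ωc : ℂ := Complex.exp (2 * π * Complex.I / 3)

/-- `W = f^{1/3}·e^{−iπ/6}/(2π)` -/
noncomputable def Wf (f : ℝ) : ℂ :=
  ((f ^ ((1 : ℝ) / 3) : ℝ) : ℂ) * Complex.exp (-(π : ℂ) * Complex.I / 6) / (2 * π)

/-- `α₊(z) = Ai(−ω(z − κf)f^{−2/3})·Ai(−(z − κf)f^{−2/3})` -/
noncomputable def alphaP (κ f : ℝ) (z : ℂ) : ℂ :=
  Ai (-ωc * (z - κ * f) * ((f ^ (-(2 : ℝ) / 3) : ℝ) : ℂ)) *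
    Ai (-(z - κ * f) * ((f ^ (-(2 : ℝ) / 3) : ℝ) : ℂ))

/-- `α₋(z) = Ai(−ω(z + κf)f^{−2/3})·Ai(−(z + κf)f^{−2/3})` -/
noncomputable def alphaM (κ f : ℝ) (z : ℂ) : ℂ :=
  Ai (-ωc * (z + κ * f) * ((f ^ (-(2 : ℝ) / 3) : ℝ) : ℂ)) *
    Ai (-(z + κ * f) * ((f ^ (-(2 : ℝ) / 3) : ℝ) : ℂ))

/-- `β₊(z) = Ai(−ω(z + κf)f^{−2/3})·Ai(−(z − κf)f^{−2/3})` -/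
noncomputable def betaP (κ f : ℝ) (z : ℂ) : ℂ :=
  Ai (-ωc * (z + κ * f) * ((f ^ (-(2 : ℝ) / 3) : ℝ) : ℂ)) *
    Ai (-(z - κ * f) * ((f ^ (-(2 : ℝ) / 3) : ℝ) : ℂ))

/-- `β₋(z) = Ai(−ω(z − κf)f^{−2/3})·Ai(−(z + κf)f^{−2/3})` -/
noncomputable def betaM (κ f : ℝ) (z : ℂ) : ℂ :=
  Ai (-ωc * (z - κ * f) * ((f ^ (-(2 : ℝ) / 3) : ℝ) : ℂ)) *
    Ai (-(z + κ * f) * ((f ^ (-(2 : ℝ) / 3) : ℝ) : ℂ))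

/-- The resonance determinant `D_f` of the Stark Hamiltonian
`p² + fx + η⁻¹(δ_κ + δ_{−κ})`:
`D_f(z) = 1 + (α₊ + α₋)/(ηW) + β₊(β₋ − β₊)/(η²W²)`. -/
noncomputable def Df (κ η f : ℝ) (z : ℂ) : ℂ :=
  1 + (alphaP κ f z + alphaM κ f z) / (η * Wf f)
    + betaP κ f z * (betaM κ f z - betaP κ f z) / (η ^ 2 * (Wf f) ^ 2)

/-- The order of vanishing of `g` at `z`: the least `n` with
`(d/dz)ⁿ g(z) ≠ 0`. -/
noncomputable def vanishingOrder (g : ℂ → ℂ) (z : ℂ) : ℕ :=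
  sInf {n : ℕ | iteratedDeriv n g z ≠ 0}

/-- The number `J(f)` of zeros of `D_f`, counted with multiplicity, lying in
`{a ≤ Re z ≤ b, Im z < 0}` (the resonances below the segment `[a,b]`). -/
noncomputable def Jcount (κ η f a b : ℝ) : ℕ :=
  ∑ᶠ z ∈ {z : ℂ | a ≤ z.re ∧ z.re ≤ b ∧ z.im < 0 ∧ Df κ η f z = 0},
    vanishingOrder (Df κ η f) z


open MeasureTheory in
lemma intble_cube (k : ℕ) {b : ℝ} (hb : 0 < b) :
    IntegrableOn (fun r : ℝ => r ^ k * Real.exp (-b * r ^ 3)) (Set.Ioi 0) := by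
  have h := integrableOn_rpow_mul_exp_neg_mul_rpow (p := 3) (s := (k : ℝ)) (b := b)
    (by have : (0 : ℝ) ≤ k := Nat.cast_nonneg k
        linarith) (by norm_num) hb
  refine h.congr_fun (fun x _ => ?_) measurableSet_Ioi
  have h3 : x ^ (3 : ℝ) = x ^ 3 := by exact_mod_cast Real.rpow_natCast x 3
  simp only [Real.rpow_natCast, h3]

noncomputable def mom (k : ℕ) : ℝ := ∫ r in Set.Ioi (0 : ℝ), r ^ k * Real.exp (-(1/3) * r ^ 3)

open MeasureTheory in
lemma mom_eq (k : ℕ) : mom k = (1/3 : ℝ) ^ (-((k : ℝ) + 1) / 3) * (1/3) * Real.Gamma (((k : ℝ) + 1) / 3) := by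
  have h := integral_rpow_mul_exp_neg_mul_rpow (p := 3) (q := (k : ℝ)) (b := 1/3)
    (by norm_num) (by have : (0 : ℝ) ≤ k := Nat.cast_nonneg k
                      linarith) (by norm_num)
  rw [← h, mom]
  refine setIntegral_congr_fun measurableSet_Ioi (fun x _ => ?_)
  have h3 : x ^ (3 : ℝ) = x ^ 3 := by exact_mod_cast Real.rpow_natCast x 3
  simp only [Real.rpow_natCast, h3]

lemma mom_succ (k : ℕ) : mom (k + 3) = (k + 1) * mom k := by
  rw [mom_eq, mom_eq]
  have e1 : (((k + 3 : ℕ) : ℝ) + 1) / 3 = ((k : ℝ) + 1) / 3 + 1 := by push_cast; ring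
  have e2 : -(((k + 3 : ℕ) : ℝ) + 1) / 3 = -((k : ℝ) + 1) / 3 - 1 := by push_cast; ring
  rw [e1, e2, Real.Gamma_add_one (by positivity), Real.rpow_sub_one (by norm_num)]
  ring

noncomputable def HH (w : ℂ) : ℂ :=
  ∫ r in Set.Ioi (0 : ℝ), Complex.exp (-(r : ℂ) ^ 3 / 3 - w * r)

lemma quad_cube {A r : ℝ} (hA : 0 ≤ A) (hr : 0 ≤ r) : A * r ^ 2 ≤ r ^ 3 / 12 + 144 * A ^ 3 := by
  by_cases h : 12 * A ≤ r
  · have : A * r ^ 2 ≤ (r / 12) * r ^ 2 := by gcongr; linarith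
    have : 0 ≤ A ^ 3 := by positivity
    nlinarith
  · push Not at h
    have : A * r ^ 2 ≤ A * (12 * A) ^ 2 := by gcongr
    have : 0 ≤ r ^ 3 := by positivity
    nlinarith

open MeasureTheory in
lemma intble_of_bound {E : Type*} [NormedAddCommGroup E] {F : ℝ → E} (hF : Continuous F) (C : ℝ) {k : ℕ}
    {b : ℝ} (hb : 0 < b) (h : ∀ r : ℝ, 0 < r → ‖F r‖ ≤ C * (r ^ k * Real.exp (-b * r ^ 3))) :
    IntegrableOn F (Set.Ioi 0) := by
  refine Integrable.mono' ((intble_cube k hb).const_mul C) hF.aestronglyMeasurable ?_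
  exact (ae_restrict_iff' measurableSet_Ioi).2 (Filter.Eventually.of_forall (fun r hr => h r hr))

lemma lin_cube {A r : ℝ} (hA : 0 ≤ A) (hr : 0 ≤ r) : A * r ≤ r ^ 3 / 12 + (A + 144 * A ^ 3) := by
  have := quad_cube hA hr
  nlinarith [mul_nonneg hA (sq_nonneg (r - 1)), mul_nonneg hA (sq_nonneg r)]

open MeasureTheory in
lemma HH_series (w : ℂ) :
    HasSum (fun k : ℕ => (-w) ^ k / (k.factorial : ℂ) * (mom k : ℂ)) (HH w) := by
  have hexp : ∀ x : ℝ, HasSum (fun k : ℕ => x ^ k / (k.factorial : ℝ)) (Real.exp x) := by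
    intro x
    rw [Real.exp_eq_exp_ℝ]
    exact NormedSpace.expSeries_div_hasSum_exp x
  have hexpc : ∀ x : ℂ, HasSum (fun k : ℕ => x ^ k / (k.factorial : ℂ)) (Complex.exp x) := by
    intro x
    rw [Complex.exp_eq_exp_ℂ]
    exact NormedSpace.expSeries_div_hasSum_exp x
  have key := hasSum_integral_of_dominated_convergence (μ := volume.restrict (Set.Ioi (0:ℝ)))
    (F := fun (k : ℕ) (r : ℝ) => (-w) ^ k / (k.factorial : ℂ) * ((r ^ k * Real.exp (-(1/3) * r ^ 3) : ℝ) : ℂ))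
    (f := fun r : ℝ => Complex.exp (-(r : ℂ) ^ 3 / 3 - w * r))
    (fun k r => (‖w‖ * r) ^ k / (k.factorial : ℝ) * Real.exp (-(1/3) * r ^ 3)) ?_ ?_ ?_ ?_ ?_
  · convert! key using 2 with k
    rw [integral_const_mul, integral_complex_ofReal]
    rfl
  · intro n
    exact (by fun_prop : Continuous _).aestronglyMeasurable
  · intro n
    refine (ae_restrict_iff' measurableSet_Ioi).2 (Filter.Eventually.of_forall (fun r hr => ?_))
    have hr : (0:ℝ) < r := hr
    rw [norm_mul, norm_div, norm_pow, norm_neg, Complex.norm_natCast, Complex.norm_real,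
      Real.norm_of_nonneg (by positivity), mul_pow]
    apply le_of_eq; ring
  · exact Filter.Eventually.of_forall (fun r => ((hexp _).summable.mul_right _))
  · have : (fun r : ℝ => ∑' k : ℕ, (‖w‖ * r) ^ k / (k.factorial : ℝ) * Real.exp (-(1/3) * r ^ 3))
        = fun r => Real.exp (‖w‖ * r) * Real.exp (-(1/3) * r ^ 3) := by
      funext r
      rw [tsum_mul_right, (hexp _).tsum_eq]
    rw [this]
    refine intble_of_bound (by fun_prop) (Real.exp (‖w‖ + 144 * ‖w‖ ^ 3)) (k := 0) (b := 1/6)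
      (by norm_num) (fun r hr => ?_)
    rw [Real.norm_of_nonneg (by positivity), pow_zero, one_mul, ← Real.exp_add, ← Real.exp_add,
      Real.exp_le_exp]
    have := lin_cube (norm_nonneg w) hr.le
    nlinarith [pow_pos hr 3]
  · refine Filter.Eventually.of_forall (fun r => ?_)
    have h := (hexpc (-w * r)).mul_right (Complex.exp (-(1/3) * (r:ℂ) ^ 3))
    rw [← Complex.exp_add] at h
    convert! h using 1
    · funext k
      push_cast
      rw [mul_pow]; ring
    · congr 1; ring

noncomputable def cc : ℂ := Complex.exp (π * Complex.I / 3)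
noncomputable def cb : ℂ := Complex.exp (-(π * Complex.I / 3))

lemma cc_eq : cc = 1 / 2 + (Real.sqrt 3 / 2 : ℝ) * Complex.I := by
  have : (π * Complex.I / 3 : ℂ) = ((π / 3 : ℝ) : ℂ) * Complex.I := by push_cast; ring
  rw [cc, this, Complex.exp_mul_I, ← Complex.ofReal_cos, ← Complex.ofReal_sin, Real.cos_pi_div_three,
    Real.sin_pi_div_three]
  push_cast; ring

lemma cb_eq : cb = 1 / 2 - (Real.sqrt 3 / 2 : ℝ) * Complex.I := by
  have : (-(π * Complex.I / 3) : ℂ) = ((-(π / 3) : ℝ) : ℂ) * Complex.I := by push_cast; ring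
  rw [cb, this, Complex.exp_mul_I, ← Complex.ofReal_cos, ← Complex.ofReal_sin, Real.cos_neg, Real.sin_neg,
    Real.cos_pi_div_three, Real.sin_pi_div_three]
  push_cast; ring

lemma cc_cube : cc ^ 3 = -1 := by
  rw [cc, ← Complex.exp_nat_mul]
  push_cast
  rw [show (3 * (π * Complex.I / 3) : ℂ) = π * Complex.I by ring, Complex.exp_pi_mul_I]

lemma cb_cube : cb ^ 3 = -1 := by
  rw [cb, ← Complex.exp_nat_mul]
  push_cast
  rw [show (3 * -(π * Complex.I / 3) : ℂ) = -(π * Complex.I) by ring, Complex.exp_neg, Complex.exp_pi_mul_I]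
  norm_num

lemma cc_mul_cb : cc * cb = 1 := by
  rw [cc, cb, ← Complex.exp_add]; simp

lemma norm_cc : ‖cc‖ = 1 := by
  have : (π * Complex.I / 3 : ℂ) = ((π / 3 : ℝ) : ℂ) * Complex.I := by push_cast; ring
  rw [cc, this, Complex.norm_exp_ofReal_mul_I]

lemma norm_cb : ‖cb‖ = 1 := by
  have : (-(π * Complex.I / 3) : ℂ) = ((-(π / 3) : ℝ) : ℂ) * Complex.I := by push_cast; ring
  rw [cb, this, Complex.norm_exp_ofReal_mul_I]

/-- coefficients of the integral -/
noncomputable def hcoef (k : ℕ) : ℂ :=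
  1 / (2 * π * Complex.I) * ((cc ^ (k + 1) - cb ^ (k + 1)) * ((-1) ^ k / (k.factorial : ℂ) * (mom k : ℂ)))

lemma sqrt3c : ((Real.sqrt 3 : ℝ) : ℂ) ^ 2 = 3 := by
  rw [← Complex.ofReal_pow, Real.sq_sqrt (by norm_num)]; norm_num

lemma cc_sub_cb : cc - cb = (Real.sqrt 3 : ℝ) * Complex.I := by
  rw [cc_eq, cb_eq]; push_cast; ring

lemma cc_add_cb : cc + cb = 1 := by
  rw [cc_eq, cb_eq]; push_cast; ring

lemma gamma_refl : Real.Gamma (1/3) * Real.Gamma (2/3) = 2 * π / Real.sqrt 3 := by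
  have h := Real.Gamma_mul_Gamma_one_sub (1/3)
  rw [show (1 - 1/3 : ℝ) = 2/3 by norm_num, show π * (1/3) = π / 3 by ring, Real.sin_pi_div_three] at h
  rw [h]; field_simp

lemma mom_zero : mom 0 = 3 ^ (-(2:ℝ)/3) * Real.Gamma (1/3) := by
  rw [mom_eq, one_div, Real.inv_rpow (by norm_num), ← Real.rpow_neg (by norm_num)]
  have : (3:ℝ) ^ (-(2:ℝ)/3) = 3 ^ (1/3 - 1 : ℝ) := by norm_num
  rw [this, Real.rpow_sub_one (by norm_num)]
  norm_num
  left; ring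

lemma mom_one : mom 1 = 3 ^ (-(1:ℝ)/3) * Real.Gamma (2/3) := by
  rw [mom_eq, one_div, Real.inv_rpow (by norm_num), ← Real.rpow_neg (by norm_num)]
  have : (3:ℝ) ^ (-(1:ℝ)/3) = 3 ^ (2/3 - 1 : ℝ) := by norm_num
  rw [this, Real.rpow_sub_one (by norm_num)]
  norm_num
  left; ring

lemma hcoef_zero : hcoef 0 = airyCoeff 0 := by
  have h0 : airyCoeff 0 = ((3 ^ (-(2:ℝ)/3) / Real.Gamma (2/3) : ℝ) : ℂ) := by
    rw [airyCoeff]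
    push_cast
    rw [Complex.ofReal_cpow (by norm_num), ← Complex.Gamma_ofReal]
    push_cast; rfl
  have hg := gamma_refl
  have hg2 : Real.Gamma (2/3) ≠ 0 := (Real.Gamma_pos_of_pos (by norm_num)).ne'
  have hs : Real.sqrt 3 ≠ 0 := by positivity
  have h1 : (3 ^ (-(2:ℝ)/3) / Real.Gamma (2/3) : ℝ) = Real.sqrt 3 / (2 * π) * mom 0 := by
    rw [mom_zero]
    field_simp
    rw [eq_div_iff hs] at hg
    linarith
  rw [h0, h1, hcoef, zero_add, pow_one, pow_one, cc_sub_cb]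
  have h5 : (π : ℂ) ≠ 0 := by exact_mod_cast Real.pi_ne_zero
  push_cast
  field_simp
  simp

lemma hcoef_one : hcoef 1 = airyCoeff 1 := by
  have h0 : airyCoeff 1 = ((-(3 ^ (-(1:ℝ)/3) / Real.Gamma (1/3)) : ℝ) : ℂ) := by
    rw [airyCoeff]
    push_cast
    rw [Complex.ofReal_cpow (by norm_num), ← Complex.Gamma_ofReal]
    push_cast; rfl
  have hg := gamma_refl
  have hg2 : Real.Gamma (1/3) ≠ 0 := (Real.Gamma_pos_of_pos (by norm_num)).ne'
  have hs : Real.sqrt 3 ≠ 0 := by positivity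
  have h1 : (3 ^ (-(1:ℝ)/3) / Real.Gamma (1/3) : ℝ) = Real.sqrt 3 / (2 * π) * mom 1 := by
    rw [mom_one]
    field_simp
    rw [eq_div_iff hs] at hg
    linarith
  rw [h0, h1, hcoef, show (1 + 1) = 2 from rfl,
    show cc ^ 2 - cb ^ 2 = (cc - cb) * (cc + cb) by ring, cc_sub_cb, cc_add_cb]
  have h5 : (π : ℂ) ≠ 0 := by exact_mod_cast Real.pi_ne_zero
  push_cast
  field_simp
  simp

lemma hcoef_eq : ∀ k, hcoef k = airyCoeff k
  | 0 => hcoef_zero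
  | 1 => hcoef_one
  | 2 => by
    rw [hcoef, show (2 + 1) = 3 from rfl, cc_cube, cb_cube, airyCoeff]; simp
  | (k + 3) => by
    rw [airyCoeff, ← hcoef_eq k, hcoef, hcoef, mom_succ]
    have e1 : cc ^ (k + 3 + 1) = - cc ^ (k + 1) := by
      rw [show k + 3 + 1 = (k + 1) + 3 by ring, pow_add, cc_cube]; ring
    have e2 : cb ^ (k + 3 + 1) = - cb ^ (k + 1) := by
      rw [show k + 3 + 1 = (k + 1) + 3 by ring, pow_add, cb_cube]; ring
    rw [e1, e2]
    have h1 : (k : ℂ) + 1 ≠ 0 := by exact_mod_cast Nat.succ_ne_zero k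
    have h2 : (k : ℂ) + 2 ≠ 0 := by exact_mod_cast Nat.succ_ne_zero (k + 1)
    have h3 : (k : ℂ) + 3 ≠ 0 := by exact_mod_cast Nat.succ_ne_zero (k + 2)
    have h4 : (k.factorial : ℂ) ≠ 0 := by exact_mod_cast Nat.factorial_ne_zero k
    have h5 : (π : ℂ) ≠ 0 := by exact_mod_cast Real.pi_ne_zero
    have hf : ((k + 3).factorial : ℂ) = ((k:ℂ) + 3) * ((k + 2) * ((k + 1) * k.factorial)) := by
      rw [Nat.factorial_succ, Nat.factorial_succ, Nat.factorial_succ]; push_cast; ring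
    rw [hf]
    push_cast
    rw [pow_add]
    field_simp
    ring

lemma Ai_hasSum (w : ℂ) : HasSum (fun k => airyCoeff k * w ^ k)
    (1 / (2 * π * Complex.I) * (cc * HH (cc * w) - cb * HH (cb * w))) := by
  have h1 := (HH_series (cc * w)).mul_left cc
  have h2 := (HH_series (cb * w)).mul_left cb
  have h3 := (h1.sub h2).mul_left (1 / (2 * π * Complex.I))
  convert! h3 using 1
  funext k
  rw [← hcoef_eq, hcoef, neg_pow (cc * w), neg_pow (cb * w), mul_pow, mul_pow]
  ring

lemma Ai_eq (w : ℂ) : Ai w = 1 / (2 * π * Complex.I) * (cc * HH (cc * w) - cb * HH (cb * w)) :=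
  (Ai_hasSum w).tsum_eq


/-- the contour integrand -/
noncomputable def FF (w t : ℂ) : ℂ := Complex.exp (t ^ 3 / 3 - w * t)

lemma FF_deriv (w t : ℂ) : HasDerivAt (FF w) ((t ^ 2 - w) * FF w t) t := by
  have h : HasDerivAt (fun t : ℂ => t ^ 3 / 3 - w * t) (t ^ 2 - w) t := by
    have h1 := ((hasDerivAt_pow 3 t).div_const 3).sub ((hasDerivAt_id t).const_mul w)
    convert! h1 using 1
    simp
  convert! h.cexp using 1
  rw [FF]; ring

lemma FF_cont (w : ℂ) : Continuous (FF w) := by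
  unfold FF; fun_prop

lemma FF_bound (w : ℂ) (Q : ℝ) (hQ : 0 ≤ Q) : ∃ C : ℝ, 0 ≤ C ∧ ∀ c q : ℂ, ∀ r : ℝ, c ^ 3 = -1 → ‖c‖ = 1 →
    ‖q‖ ≤ Q → 0 ≤ r → Real.exp r * ‖FF w (q + c * r)‖ ≤ C * Real.exp (-(1/6) * r ^ 3) := by
  set A := Q ^ 2 + ‖w‖ + 1 with hA
  have hA0 : 0 ≤ A := by positivity
  refine ⟨Real.exp (Q ^ 3 / 3 + ‖w‖ * Q + (A + 144 * A ^ 3) + 144 * Q ^ 3), by positivity, ?_⟩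
  intro c q r hc3 hc hq hr
  have e : (q + c * r) ^ 3 / 3 - w * (q + c * r)
      = (q ^ 3 / 3 - w * q + (q ^ 2 * c - w * c) * r + q * c ^ 2 * r ^ 2) + ((-(r ^ 3 / 3) : ℝ) : ℂ) := by
    have : c ^ 3 * (r:ℂ) ^ 3 = - (r:ℂ) ^ 3 := by rw [hc3]; ring
    push_cast
    linear_combination this / 3
  rw [FF, Complex.norm_exp, e, ← Real.exp_add, ← Real.exp_add, Real.exp_le_exp, Complex.add_re, Complex.ofReal_re]
  have hn : (q ^ 3 / 3 - w * q + (q ^ 2 * c - w * c) * r + q * c ^ 2 * r ^ 2).re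
      ≤ Q ^ 3 / 3 + ‖w‖ * Q + (Q ^ 2 + ‖w‖) * r + Q * r ^ 2 := by
    refine (Complex.re_le_norm _).trans ?_
    have a1 : ‖q ^ 3 / 3‖ ≤ Q ^ 3 / 3 := by
      rw [norm_div, norm_pow]; norm_num; gcongr
    have a2 : ‖w * q‖ ≤ ‖w‖ * Q := by rw [norm_mul]; gcongr
    have a3 : ‖(q ^ 2 * c - w * c) * r‖ ≤ (Q ^ 2 + ‖w‖) * r := by
      rw [norm_mul, Complex.norm_real, Real.norm_of_nonneg hr]
      gcongr
      refine (norm_sub_le _ _).trans ?_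
      rw [norm_mul, norm_mul, hc, norm_pow]; 
      have : ‖q‖ ^ 2 ≤ Q ^ 2 := by gcongr
      linarith
    have a4 : ‖q * c ^ 2 * r ^ 2‖ ≤ Q * r ^ 2 := by
      rw [norm_mul, norm_mul, norm_pow, norm_pow, hc, Complex.norm_real, Real.norm_of_nonneg hr, one_pow, mul_one]
      gcongr
    refine (norm_add_le _ _).trans ?_
    refine add_le_add ((norm_add_le _ _).trans ?_) a4
    refine add_le_add ((norm_sub_le _ _).trans ?_) a3
    exact add_le_add a1 a2
  have h1 := quad_cube hQ hr
  have h2 := lin_cube hA0 hr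
  have h3 : A * r = (Q ^ 2 + ‖w‖) * r + r := by rw [hA]; ring
  linarith

noncomputable def KK (w c q : ℂ) : ℂ := ∫ r in Set.Ioi (0:ℝ), c * FF w (q + c * r)

open MeasureTheory in
lemma KK_deriv (w c q : ℂ) (hc3 : c ^ 3 = -1) (hc : ‖c‖ = 1) : HasDerivAt (KK w c) (-FF w q) q := by
  set Q := ‖q‖ + 1 with hQ
  have hQ0 : 0 ≤ Q := by positivity
  obtain ⟨C, hC0, hC⟩ := FF_bound w Q hQ0
  have hb' : ∀ x ∈ Metric.ball q 1, ∀ r : ℝ, 0 < r →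
      ‖c * (((x + c * r) ^ 2 - w) * FF w (x + c * r))‖ ≤ ((2 * Real.exp Q + ‖w‖) * C) * (r ^ 0 * Real.exp (-(1/6) * r ^ 3)) := by
    intro x hx r hr
    have hx' : ‖x‖ ≤ Q := by
      have := norm_sub_norm_le x q
      rw [mem_ball_iff_norm] at hx
      linarith
    have h1 := hC c x r hc3 hc hx' hr.le
    have h2 : ‖(x + c * r) ^ 2 - w‖ ≤ (2 * Real.exp Q + ‖w‖) * Real.exp r := by
      refine (norm_sub_le _ _).trans ?_
      have hn : ‖x + c * r‖ ≤ Q + r := by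
        refine (norm_add_le _ _).trans ?_
        rw [norm_mul, hc, Complex.norm_real, Real.norm_of_nonneg hr.le, one_mul]
        linarith
      have h3 : ‖x + c * r‖ ^ 2 ≤ (Q + r) ^ 2 := by gcongr
      have h4 : (Q + r) ^ 2 ≤ 2 * Real.exp (Q + r) := by
        have := Real.quadratic_le_exp_of_nonneg (x := Q + r) (by positivity)
        nlinarith [hr.le]
      have h5 : 1 ≤ Real.exp r := Real.one_le_exp hr.le
      rw [Real.exp_add] at h4
      rw [norm_pow]
      nlinarith [norm_nonneg w]
    rw [norm_mul, hc, one_mul, norm_mul]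
    calc _ ≤ ((2 * Real.exp Q + ‖w‖) * Real.exp r) * ‖FF w (x + c * r)‖ := by gcongr
      _ = (2 * Real.exp Q + ‖w‖) * (Real.exp r * ‖FF w (x + c * r)‖) := by ring
      _ ≤ (2 * Real.exp Q + ‖w‖) * (C * Real.exp (-(1/6) * r ^ 3)) := by gcongr
      _ = _ := by ring
  have hFb : ∀ r : ℝ, 0 < r → ‖FF w (q + c * r)‖ ≤ C * (r ^ 0 * Real.exp (-(1/6) * r ^ 3)) := by
    intro r hr
    have h1 := hC c q r hc3 hc (by rw [hQ]; linarith) hr.le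
    have h5 : 1 ≤ Real.exp r := Real.one_le_exp hr.le
    have := mul_le_mul_of_nonneg_right h5 (norm_nonneg (FF w (q + c * r)))
    rw [pow_zero, one_mul]; linarith
  have hcF := FF_cont w
  have key := hasDerivAt_integral_of_dominated_loc_of_deriv_le (μ := volume.restrict (Set.Ioi (0:ℝ)))
    (F := fun x (r:ℝ) => c * FF w (x + c * r)) (F' := fun x (r:ℝ) => c * (((x + c * r) ^ 2 - w) * FF w (x + c * r)))
    (x₀ := q) (bound := fun r => ((2 * Real.exp Q + ‖w‖) * C) * (r ^ 0 * Real.exp (-(1/6) * r ^ 3)))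
    (Metric.ball_mem_nhds q one_pos)
    (Filter.Eventually.of_forall (fun x => (by fun_prop : Continuous _).aestronglyMeasurable))
    (intble_of_bound (by fun_prop) C (k := 0) (b := 1/6) (by norm_num) (fun r hr => by
      rw [norm_mul, hc, one_mul]; exact hFb r hr))
    ((by fun_prop : Continuous _).aestronglyMeasurable)
    ((ae_restrict_iff' measurableSet_Ioi).2 (Filter.Eventually.of_forall (fun r hr x hx => hb' x hx r hr)))
    ((intble_cube 0 (by norm_num)).const_mul _)
    (Filter.Eventually.of_forall (fun r x _ => by
      have h1 : HasDerivAt (fun x : ℂ => x + c * r) 1 x := (hasDerivAt_id x).add_const _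
      have h2 := ((FF_deriv w (x + c * r)).comp x h1).const_mul c
      convert! h2 using 1
      rw [mul_one]))
  have hd := key.2
  have hint : ∫ r in Set.Ioi (0:ℝ), c * (((q + c * r) ^ 2 - w) * FF w (q + c * r)) = 0 - FF w (q + c * ((0:ℝ):ℂ)) := by
    refine integral_Ioi_of_hasDerivAt_of_tendsto (f := fun r : ℝ => FF w (q + c * r)) ?_ ?_ key.1 ?_
    · exact (by fun_prop : Continuous (fun r : ℝ => FF w (q + c * r))).continuousWithinAt
    · intro r _
      have h1 : HasDerivAt (fun r : ℝ => q + c * (r:ℂ)) c r := by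
        have := ((hasDerivAt_id (r:ℂ)).const_mul c).const_add q
        simpa using this.comp_ofReal
      have h2 := HasDerivAt.comp r (FF_deriv w (q + c * r)) h1
      convert! h2 using 1
      ring
    · refine squeeze_zero_norm' (a := fun r => C * Real.exp (-(1/6) * r ^ 3)) ?_ ?_
      · filter_upwards [Filter.eventually_gt_atTop 0] with r hr
        simpa using hFb r hr
      · have : Filter.Tendsto (fun r : ℝ => Real.exp (-(1/6) * r ^ 3)) Filter.atTop (nhds 0) := by
          refine Real.tendsto_exp_atBot.comp ?_
          exact (Filter.tendsto_pow_atTop (by norm_num)).const_mul_atTop_of_neg (by norm_num)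
        simpa using this.const_mul C
  simp only [Complex.ofReal_zero, mul_zero, add_zero, zero_sub] at hint
  rw [hint] at hd
  exact hd

lemma KK_zero (w c : ℂ) (hc3 : c ^ 3 = -1) : KK w c 0 = c * HH (c * w) := by
  rw [KK, HH, MeasureTheory.integral_const_mul]
  congr 2
  funext r
  rw [FF]
  congr 1
  have : (0 + c * (r:ℂ)) ^ 3 = c ^ 3 * r ^ 3 := by ring
  rw [this, hc3]; ring

lemma Ai_shift (p : ℂ) : Ai (p ^ 2) = 1 / (2 * π * Complex.I) * (KK (p ^ 2) cc p - KK (p ^ 2) cb p) := by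
  rw [Ai_eq, ← KK_zero _ _ cc_cube, ← KK_zero _ _ cb_cube]
  have hd : ∀ q, HasDerivAt (fun q => KK (p ^ 2) cc q - KK (p ^ 2) cb q) 0 q := by
    intro q
    have := (KK_deriv (p ^ 2) cc q cc_cube norm_cc).sub (KK_deriv (p ^ 2) cb q cb_cube norm_cb)
    rw [sub_self] at this
    exact this
  have := is_const_of_deriv_eq_zero (fun q => (hd q).differentiableAt) (fun q => (hd q).deriv) 0 p
  rw [this]


open MeasureTheory in
lemma intble_sq (k : ℕ) {b : ℝ} (hb : 0 < b) :
    IntegrableOn (fun r : ℝ => r ^ k * Real.exp (-b * r ^ 2)) (Set.Ioi 0) := by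
  have h := integrableOn_rpow_mul_exp_neg_mul_rpow (p := 2) (s := (k : ℝ)) (b := b)
    (by have : (0 : ℝ) ≤ k := Nat.cast_nonneg k
        linarith) (by norm_num) hb
  refine h.congr_fun (fun x _ => ?_) measurableSet_Ioi
  have h3 : x ^ (2 : ℝ) = x ^ 2 := by exact_mod_cast Real.rpow_natCast x 2
  simp only [Real.rpow_natCast, h3]

noncomputable def ee (σ θ : ℝ) : ℂ := Complex.exp ((σ * θ : ℝ) * Complex.I)

noncomputable def Phi (p σ θ r : ℝ) : ℂ :=
  ee σ θ * Complex.exp (p * ee σ θ ^ 2 * r ^ 2 + ee σ θ ^ 3 * r ^ 3 / 3)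

lemma ee_cont (σ : ℝ) : Continuous (ee σ) := by unfold ee; fun_prop

lemma ee_norm (σ θ : ℝ) : ‖ee σ θ‖ = 1 := by rw [ee, Complex.norm_exp_ofReal_mul_I]

lemma ee_pow_re (σ θ : ℝ) (n : ℕ) : (ee σ θ ^ n).re = Real.cos (n * (σ * θ)) := by
  rw [ee, ← Complex.exp_nat_mul]
  rw [show ((n:ℂ) * ((σ * θ : ℝ) * Complex.I)) = ((n * (σ * θ) : ℝ) : ℂ) * Complex.I by push_cast; ring,
    Complex.exp_ofReal_mul_I_re]

lemma ee_deriv (σ θ : ℝ) : HasDerivAt (ee σ) (σ * Complex.I * ee σ θ) θ := by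
  have h : HasDerivAt (fun θ : ℝ => ((σ * θ : ℝ) : ℂ) * Complex.I) (σ * Complex.I) θ := by
    have h1 : HasDerivAt (fun θ : ℝ => σ * θ) σ θ := by simpa using (hasDerivAt_id θ).const_mul σ
    exact (h1.ofReal_comp).mul_const Complex.I
  convert! h.cexp using 1
  rw [ee]; ring

lemma Phi_norm {p σ θ r : ℝ} (hp : 0 < p) (hr : 0 ≤ r) (h2 : Real.cos (2 * (σ * θ)) ≤ -(1/4))
    (h3 : Real.cos (3 * (σ * θ)) ≤ 0) : ‖Phi p σ θ r‖ ≤ Real.exp (-(p/4) * r ^ 2) := by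
  rw [Phi, norm_mul, ee_norm, one_mul, Complex.norm_exp, Real.exp_le_exp]
  have e1 : ((p:ℂ) * ee σ θ ^ 2 * r ^ 2 + ee σ θ ^ 3 * r ^ 3 / 3) =
     ((p * r ^ 2 : ℝ) : ℂ) * ee σ θ ^ 2 + ((r ^ 3 / 3 : ℝ) : ℂ) * ee σ θ ^ 3 := by push_cast; ring
  rw [e1, Complex.add_re, Complex.re_ofReal_mul, Complex.re_ofReal_mul, ee_pow_re, ee_pow_re]
  push_cast
  have a : p * r ^ 2 * Real.cos (2 * (σ * θ)) ≤ p * r ^ 2 * (-(1/4)) := by gcongr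
  have b : r ^ 3 / 3 * Real.cos (3 * (σ * θ)) ≤ r ^ 3 / 3 * 0 := by gcongr
  linarith

noncomputable def Phi' (p σ θ r : ℝ) : ℂ :=
  σ * Complex.I * (1 + 2 * p * ee σ θ ^ 2 * r ^ 2 + ee σ θ ^ 3 * r ^ 3) * Phi p σ θ r

lemma Phi_deriv (p σ θ r : ℝ) : HasDerivAt (fun θ => Phi p σ θ r) (Phi' p σ θ r) θ := by
  have h := ee_deriv σ θ
  have h2 := ((h.pow 2).const_mul (p:ℂ)).mul_const ((r:ℂ) ^ 2)
  have h3 := ((h.pow 3).mul_const ((r:ℂ) ^ 3)).div_const 3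
  have h4 := h.mul (h2.add h3).cexp
  convert! h4 using 1
  simp only [Phi', Phi, Pi.add_apply, Pi.pow_apply]
  push_cast
  ring

lemma Phi_deriv_r (p σ θ r : ℝ) : HasDerivAt (fun r : ℝ => σ * Complex.I * r * Phi p σ θ r) (Phi' p σ θ r) r := by
  have h0 : HasDerivAt (fun r : ℝ => (r:ℂ)) 1 r := (hasDerivAt_id (r:ℝ)).ofReal_comp
  have h2 := (h0.pow 2).const_mul ((p:ℂ) * ee σ θ ^ 2)
  have h3 := ((h0.pow 3).const_mul (ee σ θ ^ 3)).div_const 3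
  have h4 := ((h2.add h3).cexp).const_mul (ee σ θ)
  have h5 := (h0.const_mul (σ * Complex.I : ℂ)).mul h4
  convert! h5 using 1
  simp only [Phi', Phi, Pi.add_apply, Pi.pow_apply]
  push_cast
  ring

lemma Phi_cont_r (p σ θ : ℝ) : Continuous (fun r : ℝ => Phi p σ θ r) := by unfold Phi; fun_prop
lemma Phi'_cont_r (p σ θ : ℝ) : Continuous (fun r : ℝ => Phi' p σ θ r) := by
  unfold Phi'; have := Phi_cont_r p σ θ; fun_prop

open MeasureTheory in
lemma rot_const {p σ : ℝ} (hp : 0 < p) (hσ : σ = 1 ∨ σ = -1) :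
    ∫ r in Set.Ioi (0:ℝ), Phi p σ (π/2) r = ∫ r in Set.Ioi (0:ℝ), Phi p σ (π/3) r := by
  have hpi := Real.pi_pos
  have hcs : ∀ n θ : ℝ, Real.cos (n * (σ * θ)) = Real.cos (n * θ) := by
    intro n θ
    rcases hσ with rfl | rfl
    · rw [one_mul]
    · rw [← Real.cos_neg]; congr 1; ring
  have hc2 : ∀ θ ∈ Set.Icc (π/3) (π/2), Real.cos (2 * (σ * θ)) < -(1/4) := by
    intro θ hθ
    rw [hcs]
    have h1 : Real.cos (2 * θ) ≤ Real.cos (π - π / 3) :=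
      Real.cos_le_cos_of_nonneg_of_le_pi (by linarith) (by linarith [hθ.2]) (by linarith [hθ.1])
    rw [Real.cos_pi_sub, Real.cos_pi_div_three] at h1
    linarith
  have hc3 : ∀ θ ∈ Set.Ico (π/3) (π/2), Real.cos (3 * (σ * θ)) < 0 := by
    intro θ hθ
    rw [hcs]
    exact Real.cos_neg_of_pi_div_two_lt_of_lt (by linarith [hθ.1]) (by linarith [hθ.2])
  have hc3' : ∀ θ ∈ Set.Icc (π/3) (π/2), Real.cos (3 * (σ * θ)) ≤ 0 := by
    intro θ hθ
    rw [hcs]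
    exact Real.cos_nonpos_of_pi_div_two_le_of_le (by linarith [hθ.1]) (by linarith [hθ.2])
  have hσn : ‖(σ:ℂ)‖ = 1 := by rcases hσ with rfl | rfl <;> simp
  refine constant_of_has_deriv_right_zero (f := fun θ => ∫ r in Set.Ioi (0:ℝ), Phi p σ θ r)
    (a := π/3) (b := π/2) ?_ ?_ (π/2) ⟨by linarith, le_rfl⟩
  · refine continuousOn_of_dominated (bound := fun r => r ^ 0 * Real.exp (-(p/4) * r ^ 2))
      (fun θ _ => (Phi_cont_r p σ θ).aestronglyMeasurable) ?_ (intble_sq 0 (by positivity)) ?_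
    · intro θ hθ
      refine (ae_restrict_iff' measurableSet_Ioi).2 (Filter.Eventually.of_forall (fun r hr => ?_))
      rw [pow_zero, one_mul]
      exact Phi_norm hp (le_of_lt hr) (hc2 θ hθ).le (hc3' θ hθ)
    · refine Filter.Eventually.of_forall (fun r => ?_)
      exact fun θ _ => (Phi_deriv p σ θ r).continuousAt.continuousWithinAt
  · intro θ hθ
    set S := {t : ℝ | Real.cos (2 * (σ * t)) < -(1/4)} ∩ {t : ℝ | Real.cos (3 * (σ * t)) < 0} with hS
    have hSo : IsOpen S := (isOpen_lt (by fun_prop) (by fun_prop)).inter (isOpen_lt (by fun_prop) (by fun_prop))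
    have hSm : S ∈ nhds θ := hSo.mem_nhds ⟨hc2 θ ⟨hθ.1, hθ.2.le⟩, hc3 θ hθ⟩
    have hbound : ∀ t ∈ S, ∀ r : ℝ, 0 < r → ‖Phi' p σ t r‖ ≤ r ^ 0 * Real.exp (-(p/4) * r ^ 2)
       + 2 * p * (r ^ 2 * Real.exp (-(p/4) * r ^ 2)) + r ^ 3 * Real.exp (-(p/4) * r ^ 2) := by
      intro t ht r hr
      have h1 := Phi_norm hp hr.le ht.1.le ht.2.le
      have h2 : ‖(1 + 2 * p * ee σ t ^ 2 * r ^ 2 + ee σ t ^ 3 * r ^ 3 : ℂ)‖ ≤ 1 + 2 * p * r ^ 2 + r ^ 3 := by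
        refine (norm_add_le _ _).trans (add_le_add ((norm_add_le _ _).trans (add_le_add ?_ ?_)) ?_)
        · simp
        · simp [ee_norm, abs_of_pos hp]
        · simp [ee_norm, abs_of_pos hr]
      rw [Phi', norm_mul, norm_mul, norm_mul, hσn, Complex.norm_I, one_mul, one_mul]
      calc _ ≤ (1 + 2 * p * r ^ 2 + r ^ 3) * Real.exp (-(p/4) * r ^ 2) := by gcongr
        _ = _ := by ring
    have hint0 := intble_sq 0 (b := p / 4) (by positivity)
    have hint2 := intble_sq 2 (b := p / 4) (by positivity)
    have hint3 := intble_sq 3 (b := p / 4) (by positivity)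
    have key := hasDerivAt_integral_of_dominated_loc_of_deriv_le (μ := volume.restrict (Set.Ioi (0:ℝ)))
      (F := fun t r => Phi p σ t r) (F' := fun t r => Phi' p σ t r) (x₀ := θ)
      (bound := fun r => r ^ 0 * Real.exp (-(p/4) * r ^ 2)
       + 2 * p * (r ^ 2 * Real.exp (-(p/4) * r ^ 2)) + r ^ 3 * Real.exp (-(p/4) * r ^ 2)) hSm
      (Filter.Eventually.of_forall (fun t => (Phi_cont_r p σ t).aestronglyMeasurable))
      (Integrable.mono' hint0 (Phi_cont_r p σ θ).aestronglyMeasurable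
        ((ae_restrict_iff' measurableSet_Ioi).2 (Filter.Eventually.of_forall (fun r hr => by
          rw [pow_zero, one_mul]
          exact Phi_norm hp (le_of_lt hr) (hc2 θ ⟨hθ.1, hθ.2.le⟩).le (hc3 θ hθ).le))))
      (Phi'_cont_r p σ θ).aestronglyMeasurable
      ((ae_restrict_iff' measurableSet_Ioi).2 (Filter.Eventually.of_forall (fun r hr t ht => hbound t ht r hr)))
      ((hint0.add (hint2.const_mul (2 * p))).add hint3)
      (Filter.Eventually.of_forall (fun r t _ => Phi_deriv p σ t r))
    have hz : ∫ r in Set.Ioi (0:ℝ), Phi' p σ θ r = 0 - σ * Complex.I * ((0:ℝ):ℂ) * Phi p σ θ 0 := by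
      refine integral_Ioi_of_hasDerivAt_of_tendsto (f := fun r : ℝ => σ * Complex.I * r * Phi p σ θ r)
        (Phi_deriv_r p σ θ 0).continuousAt.continuousWithinAt (fun r _ => Phi_deriv_r p σ θ r) key.1 ?_
      refine squeeze_zero_norm' (a := fun r => r * Real.exp (-(p/4) * r ^ 2)) ?_ ?_
      · filter_upwards [Filter.eventually_gt_atTop 0] with r hr
        rw [norm_mul, norm_mul, norm_mul, hσn, Complex.norm_I, one_mul, one_mul, Complex.norm_real,
          Real.norm_of_nonneg hr.le]
        gcongr
        exact Phi_norm hp (le_of_lt hr) (hc2 θ ⟨hθ.1, hθ.2.le⟩).le (hc3 θ hθ).le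
      · have := rpow_mul_exp_neg_mul_sq_isLittleO_exp_neg (b := p/4) (by positivity) 1
        have h2 := this.isBigO.trans_tendsto (g'' := fun x : ℝ => Real.exp (-(1/2) * x)) (by
          refine Real.tendsto_exp_atBot.comp ?_
          exact Filter.tendsto_id.const_mul_atTop_of_neg (by norm_num))
        simpa using h2
    have hd := key.2
    rw [hz] at hd
    simp only [Complex.ofReal_zero, mul_zero, zero_mul, sub_zero] at hd
    exact hd.hasDerivWithinAt


noncomputable def GG (p : ℂ) : ℂ := ∫ r in Set.Ioi (0:ℝ), Complex.exp (-p * r ^ 2) * (Real.cos (r ^ 3 / 3) : ℝ)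

lemma exp_sq_norm (p : ℂ) (r : ℝ) : ‖Complex.exp (-p * (r:ℂ) ^ 2)‖ = Real.exp (-p.re * r ^ 2) := by
  rw [Complex.norm_exp]
  congr 1
  rw [← Complex.ofReal_pow, Complex.re_mul_ofReal, Complex.neg_re]

open MeasureTheory in
lemma GG_intble {p : ℂ} (hp : 0 < p.re) {h : ℝ → ℂ} (hc : Continuous h) {k : ℕ} {C : ℝ} (hh : ∀ r : ℝ, 0 < r → ‖h r‖ ≤ C * r ^ k) :
    IntegrableOn (fun r : ℝ => Complex.exp (-p * (r:ℂ) ^ 2) * h r) (Set.Ioi 0) := by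
  refine Integrable.mono' ((intble_sq k hp).const_mul C) (by fun_prop : Continuous _).aestronglyMeasurable ?_
  refine (ae_restrict_iff' measurableSet_Ioi).2 (Filter.Eventually.of_forall (fun r hr => ?_))
  rw [norm_mul, exp_sq_norm]
  calc _ ≤ Real.exp (-p.re * r ^ 2) * (C * r ^ k) := by gcongr; exact hh r hr
    _ = _ := by ring

lemma KK_Phi (p : ℝ) (c : ℂ) (σ : ℝ) (hc : ee σ (π/3) = c) :
    KK ((p:ℂ) ^ 2) c p = Complex.exp (-2 * p ^ 3 / 3) * ∫ r in Set.Ioi (0:ℝ), Phi p σ (π/3) r := by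
  rw [KK, ← MeasureTheory.integral_const_mul]
  congr 1
  funext r
  rw [Phi, hc, FF, mul_left_comm, ← Complex.exp_add]
  congr 2
  ring

open MeasureTheory in
lemma Ai_GG_real {p : ℝ} (hp : 0 < p) :
    Ai ((p:ℂ) ^ 2) = Complex.exp (-2 * p ^ 3 / 3) / π * GG p := by
  have e1 : ee 1 (π/3) = cc := by rw [ee, cc]; congr 1; push_cast; ring
  have e2 : ee (-1) (π/3) = cb := by rw [ee, cb]; congr 1; push_cast; ring
  have f1 : ee 1 (π/2) = Complex.I := by
    rw [ee, one_mul]; push_cast; exact Complex.exp_pi_div_two_mul_I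
  have f2 : ee (-1) (π/2) = -Complex.I := by
    rw [ee]; push_cast; rw [show (-1 * ((π:ℂ)/2) * Complex.I) = -(π/2 * Complex.I) by ring, Complex.exp_neg,
      Complex.exp_pi_div_two_mul_I, Complex.inv_I]
  rw [Ai_shift, KK_Phi p cc 1 e1, KK_Phi p cb (-1) e2, ← rot_const hp (Or.inl rfl), ← rot_const hp (Or.inr rfl)]
  have hre : 0 < (p:ℂ).re := by simpa using hp
  have g1 : (fun r : ℝ => Phi p 1 (π/2) r) = fun r : ℝ => Complex.exp (-(p:ℂ) * (r:ℂ) ^ 2) * (Complex.I * Complex.exp ((-(r^3/3) : ℝ) * Complex.I)) := by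
    funext r
    rw [Phi, f1, mul_left_comm, ← Complex.exp_add]
    congr 2
    push_cast
    linear_combination (p:ℂ) * r ^ 2 * Complex.I_sq + Complex.I * r ^ 3 / 3 * Complex.I_sq
  have g2 : (fun r : ℝ => Phi p (-1) (π/2) r) = fun r : ℝ => Complex.exp (-(p:ℂ) * (r:ℂ) ^ 2) * (-Complex.I * Complex.exp (((r^3/3) : ℝ) * Complex.I)) := by
    funext r
    rw [Phi, f2, mul_left_comm, ← Complex.exp_add]
    congr 2
    push_cast
    linear_combination (p:ℂ) * r ^ 2 * Complex.I_sq - Complex.I * r ^ 3 / 3 * Complex.I_sq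
  have i1 := GG_intble hre (h := fun r : ℝ => (Complex.I * Complex.exp ((-(r^3/3) : ℝ) * Complex.I))) (by fun_prop) (k := 0) (C := 1)
    (fun r _ => by rw [norm_mul, Complex.norm_I, Complex.norm_exp_ofReal_mul_I]; simp)
  have i2 := GG_intble hre (h := fun r : ℝ => (-Complex.I * Complex.exp (((r^3/3) : ℝ) * Complex.I))) (by fun_prop) (k := 0) (C := 1)
    (fun r _ => by rw [norm_mul, norm_neg, Complex.norm_I, Complex.norm_exp_ofReal_mul_I]; simp)
  have hsub : (∫ r in Set.Ioi (0:ℝ), Phi p 1 (π/2) r) - ∫ r in Set.Ioi (0:ℝ), Phi p (-1) (π/2) r = 2 * Complex.I * GG p := by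
    rw [g1, g2, ← integral_sub i1 i2, GG, ← integral_const_mul]
    congr 1
    funext r
    have := Complex.two_cos ((r^3/3 : ℝ) : ℂ)
    rw [Complex.ofReal_cos, show (2 * Complex.I * (Complex.exp (-(p:ℂ) * (r:ℂ) ^ 2) * Complex.cos ((r^3/3:ℝ):ℂ)))
      = Complex.I * Complex.exp (-(p:ℂ) * (r:ℂ) ^ 2) * (2 * Complex.cos ((r^3/3:ℝ):ℂ)) by ring, this]
    push_cast
    ring_nf
  rw [← mul_sub, hsub]
  have h5 : (π : ℂ) ≠ 0 := by exact_mod_cast Real.pi_ne_zero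
  field_simp

open MeasureTheory in
lemma GG_diff : DifferentiableOn ℂ GG {p : ℂ | 0 < p.re} := by
  intro p hp
  have hp : 0 < p.re := hp
  have hS : {q : ℂ | p.re / 2 < q.re} ∈ nhds p :=
    (isOpen_lt continuous_const Complex.continuous_re).mem_nhds (by simp only [Set.mem_setOf_eq]; linarith)
  have hcos : ∀ r : ℝ, ‖((Real.cos (r ^ 3 / 3) : ℝ) : ℂ)‖ ≤ 1 := by
    intro r; rw [Complex.norm_real]; exact Real.abs_cos_le_one _
  have key := hasDerivAt_integral_of_dominated_loc_of_deriv_le (μ := volume.restrict (Set.Ioi (0:ℝ)))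
      (F := fun (q : ℂ) (r : ℝ) => Complex.exp (-q * (r:ℂ) ^ 2) * ((Real.cos (r ^ 3 / 3) : ℝ) : ℂ))
      (F' := fun (q : ℂ) (r : ℝ) => Complex.exp (-q * (r:ℂ) ^ 2) * (-(r:ℂ) ^ 2 * ((Real.cos (r ^ 3 / 3) : ℝ) : ℂ))) (x₀ := p)
      (bound := fun r => r ^ 2 * Real.exp (-(p.re / 2) * r ^ 2)) hS
      (Filter.Eventually.of_forall (fun t => (by fun_prop : Continuous _).aestronglyMeasurable))
      (GG_intble hp (by fun_prop) (k := 0) (C := 1) (fun r _ => by simpa using hcos r))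
      ((by fun_prop : Continuous _).aestronglyMeasurable)
      ((ae_restrict_iff' measurableSet_Ioi).2 (Filter.Eventually.of_forall (fun r hr q hq => by
        have hq : p.re / 2 < q.re := hq
        rw [norm_mul, exp_sq_norm, norm_mul, norm_neg, norm_pow, Complex.norm_real, Real.norm_eq_abs, sq_abs]
        have h1 : Real.exp (-q.re * r ^ 2) ≤ Real.exp (-(p.re / 2) * r ^ 2) := by
          rw [Real.exp_le_exp]; nlinarith [sq_nonneg r]
        calc _ ≤ Real.exp (-(p.re / 2) * r ^ 2) * (r ^ 2 * 1) := by gcongr; exact hcos r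
          _ = _ := by ring)))
      (intble_sq 2 (by positivity))
      (Filter.Eventually.of_forall (fun r q _ => by
        have h1 : HasDerivAt (fun q : ℂ => -q * (r:ℂ) ^ 2) (-1 * (r:ℂ) ^ 2) q := (hasDerivAt_neg q).mul_const _
        have h2 := h1.cexp.mul_const ((Real.cos (r ^ 3 / 3) : ℝ) : ℂ)
        convert! h2 using 1
        ring))
  exact key.2.differentiableAt.differentiableWithinAt

lemma Ai_differentiable : Differentiable ℂ Ai := by
  intro w
  set R : ℝ := ‖w‖ + 1 with hR
  have hR0 : 0 < R := by positivity
  have hs : Summable (fun k => ‖airyCoeff k * (R:ℂ) ^ k‖) := (Ai_hasSum (R:ℂ)).summable.norm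
  have h := Complex.differentiableOn_tsum_of_summable_norm (F := fun k (z:ℂ) => airyCoeff k * z ^ k)
    (U := Metric.ball 0 R) hs (fun k => by fun_prop) Metric.isOpen_ball (fun k z hz => by
      rw [norm_mul, norm_mul, norm_pow, norm_pow, Complex.norm_real, Real.norm_of_nonneg hR0.le]
      have : ‖z‖ ≤ R := by simpa using (Metric.mem_ball.1 hz).le
      gcongr)
  have h2 : DifferentiableOn ℂ Ai (Metric.ball 0 R) := h
  exact h2.differentiableAt (Metric.isOpen_ball.mem_nhds (by simp [hR]))

lemma Ai_GG {p : ℂ} (hp : 0 < p.re) : Ai (p ^ 2) = Complex.exp (-2 * p ^ 3 / 3) / π * GG p := by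
  have hU : IsOpen {p : ℂ | 0 < p.re} := isOpen_lt continuous_const Complex.continuous_re
  have h1 : AnalyticOnNhd ℂ (fun p : ℂ => Ai (p ^ 2)) {p : ℂ | 0 < p.re} :=
    DifferentiableOn.analyticOnNhd (Ai_differentiable.comp (by fun_prop)).differentiableOn hU
  have h2 : AnalyticOnNhd ℂ (fun p : ℂ => Complex.exp (-2 * p ^ 3 / 3) / π * GG p) {p : ℂ | 0 < p.re} :=
    DifferentiableOn.analyticOnNhd (DifferentiableOn.mul (by fun_prop) GG_diff) hU
  have hc : IsPreconnected {p : ℂ | 0 < p.re} := (convex_halfSpace_re_gt 0).isPreconnected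
  refine h1.eqOn_of_preconnected_of_frequently_eq h2 hc (z₀ := 1) (by simp) ?_ hp
  have ht : Filter.Tendsto (fun x : ℝ => (x:ℂ)) (nhdsWithin 1 {1}ᶜ) (nhdsWithin 1 {1}ᶜ) := by
    refine tendsto_nhdsWithin_iff.2 ⟨?_, ?_⟩
    · exact (Complex.continuous_ofReal.tendsto' 1 1 (by simp)).mono_left nhdsWithin_le_nhds
    · filter_upwards [self_mem_nhdsWithin] with x hx
      simpa using hx
  refine ht.frequently (Filter.Eventually.frequently ?_)
  have : ∀ᶠ x : ℝ in nhds 1, 0 < x := lt_mem_nhds (by norm_num)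
  filter_upwards [nhdsWithin_le_nhds this] with x hx
  exact Ai_GG_real hx


open MeasureTheory in
lemma GG_approx {p : ℂ} (hp : 0 < p.re) : ‖GG p - (π / p) ^ (1 / 2 : ℂ) / 2‖ ≤ 1 / (6 * p.re ^ 2) := by
  have i1 := GG_intble hp (h := fun r : ℝ => ((Real.cos (r^3/3) : ℝ) : ℂ)) (by fun_prop) (k := 0) (C := 1)
    (fun r _ => by rw [Complex.norm_real]; simpa using Real.abs_cos_le_one _)
  have i2 := GG_intble hp (h := fun r : ℝ => (1 : ℂ)) (by fun_prop) (k := 0) (C := 1)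
    (fun r _ => by simp)
  rw [← integral_gaussian_complex_Ioi hp, GG]
  have e2 : (∫ x in Set.Ioi (0:ℝ), Complex.exp (-p * (x:ℂ) ^ 2)) = ∫ x in Set.Ioi (0:ℝ), Complex.exp (-p * (x:ℂ) ^ 2) * 1 := by simp
  rw [e2, ← integral_sub i1 i2]
  have e3 : (∫ r in Set.Ioi (0:ℝ), (1/3) * (r ^ (3:ℝ) * Real.exp (- p.re * r ^ (2:ℝ)))) = 1 / (6 * p.re ^ 2) := by
    rw [integral_const_mul, integral_rpow_mul_exp_neg_mul_rpow (by norm_num) (by norm_num) hp]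
    have : (-((3:ℝ) + 1) / 2) = -2 := by norm_num
    rw [this, show ((3:ℝ)+1)/2 = (1:ℕ) + 1 by norm_num, Real.Gamma_nat_eq_factorial, Real.rpow_neg hp.le]
    norm_num
    ring
  rw [← e3]
  have e4 : ∀ r : ℝ, r ^ (3:ℝ) * Real.exp (- p.re * r ^ (2:ℝ)) = r ^ 3 * Real.exp (- p.re * r ^ 2) := by
    intro r; rw [Real.rpow_ofNat, Real.rpow_ofNat]
  refine norm_integral_le_of_norm_le ?_ ?_
  · simp_rw [e4]
    exact (intble_sq 3 hp).const_mul _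
  · refine (ae_restrict_iff' measurableSet_Ioi).2 (Filter.Eventually.of_forall (fun r hr => ?_))
    have hr : 0 < r := hr
    rw [e4, ← mul_sub, norm_mul, exp_sq_norm, ← Complex.ofReal_one, ← Complex.ofReal_sub, Complex.norm_real, Real.norm_eq_abs]
    have h1 : |Real.cos (r^3/3) - 1| ≤ r^3/3 := by
      have := Real.one_sub_sq_div_two_le_cos (x := r^3/3)
      have h2 := Real.cos_le_one (r^3/3)
      have h3 := Real.neg_one_le_cos (r^3/3)
      have h4 : 0 < r^3 := by positivity
      rw [abs_le]
      constructor
      · by_cases h : r^3/3 ≤ 2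
        · nlinarith
        · push Not at h; linarith
      · linarith
    calc _ ≤ Real.exp (-p.re * r^2) * (r^3/3) := by gcongr
      _ = _ := by ring

/-- relative error -/
noncomputable def epsG (p : ℂ) : ℂ := 2 * GG p / (π / p) ^ (1 / 2 : ℂ) - 1

lemma pip_ne {p : ℂ} (hp : 0 < p.re) : (π : ℂ) / p ≠ 0 := by
  have h0 : p ≠ 0 := by rintro rfl; simp at hp
  have h5 : (π : ℂ) ≠ 0 := by exact_mod_cast Real.pi_ne_zero
  positivity

lemma half_sq (x : ℂ) : (x ^ (1 / 2 : ℂ)) ^ 2 = x := by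
  simp

lemma GG_eps {p : ℂ} (hp : 0 < p.re) : GG p = (π / p) ^ (1 / 2 : ℂ) / 2 * (1 + epsG p) := by
  have h := pip_ne hp
  have h1 : ((π : ℂ) / p) ^ (1 / 2 : ℂ) ≠ 0 := by
    intro h0; have := half_sq (π / p); rw [h0] at this; simp at this; exact h (by simpa using this.symm)
  rw [epsG]; field_simp; ring

lemma eps_bound {p : ℂ} (hp : 0 < p.re) (hc : ‖p‖ ≤ 4 * p.re) : ‖epsG p‖ ≤ 6 * √(1 / ‖p‖ ^ 3) := by
  have h := pip_ne hp
  set s := ((π : ℂ) / p) ^ (1 / 2 : ℂ) with hs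
  have hs2 : s ^ 2 = π / p := half_sq _
  have h1 : s ≠ 0 := by
    intro h0; rw [h0] at hs2; exact h (by simpa using hs2.symm)
  have hpn : 0 < ‖p‖ := norm_pos_iff.2 (by rintro rfl; simp at hp)
  have e : epsG p = 2 * (GG p - s / 2) / s := by rw [epsG, ← hs]; field_simp
  have hn : ‖s‖ ^ 2 = π / ‖p‖ := by
    rw [← norm_pow, hs2, norm_div, Complex.norm_real, Real.norm_of_nonneg pi_pos.le]
  rw [e, norm_div, norm_mul]
  have hA := GG_approx hp
  rw [← hs] at hA
  have hsn : 0 < ‖s‖ := norm_pos_iff.2 h1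
  rw [div_le_iff₀ hsn]
  have hB : 1 / (6 * p.re^2) ≤ 16 / (6 * ‖p‖^2) := by
    rw [div_le_div_iff₀ (by positivity) (by positivity)]
    nlinarith
  have hC : 6 * √(1/‖p‖^3) * ‖s‖ = 6 * √π / ‖p‖^2 := by
    have : ‖s‖ = √(π/‖p‖) := by rw [← hn, Real.sqrt_sq hsn.le]
    rw [this, mul_assoc, ← Real.sqrt_mul (by positivity), show 1/‖p‖^3 * (π/‖p‖) = π / (‖p‖^2)^2 by field_simp,
      Real.sqrt_div pi_pos.le, Real.sqrt_sq (by positivity)]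
    ring
  rw [hC]
  have hpi : 1 ≤ √π := by rw [Real.one_le_sqrt]; linarith [pi_gt_three]
  calc ‖(2:ℂ)‖ * ‖GG p - s/2‖ ≤ 2 * (16 / (6 * ‖p‖^2)) := by
        rw [Complex.norm_two]; gcongr; linarith
    _ ≤ 6 * √π / ‖p‖^2 := by
        rw [show 2 * (16 / (6 * ‖p‖^2)) = (16/3) / ‖p‖^2 by ring]
        gcongr; linarith

lemma eq_of_sq_re {x y : ℂ} (h : x ^ 2 = y ^ 2) (hx : 0 < x.re) (hy : 0 < y.re) : x = y := by
  rcases sq_eq_sq_iff_eq_or_eq_neg.1 h with h | h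
  · exact h
  · rw [h] at hx; simp at hx; linarith

lemma half_prod {p q r : ℂ} (hp : 0 < p.re) (hq : 0 < q.re) (hr : 0 < r.re) (h : p * q = r ^ 2) :
    (π / p) ^ (1 / 2 : ℂ) * (π / q) ^ (1 / 2 : ℂ) = π / r := by
  have key : ∀ p : ℂ, 0 < p.re → 0 < ((π / p) ^ (1 / 2 : ℂ)).re ∧ |((π / p) ^ (1 / 2 : ℂ)).im| < ((π / p) ^ (1 / 2 : ℂ)).re := by
    intro p hp
    have h0 : 0 < ((π:ℂ) / p).re := by
      rw [Complex.div_re]; simp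
      have : 0 < Complex.normSq p := Complex.normSq_pos.2 (by rintro rfl; simp at hp)
      positivity
    have hs := half_sq (π / p)
    set s := ((π : ℂ) / p) ^ (1 / 2 : ℂ) with hs'
    have h1 : 0 ≤ s.re := by
      have harg : s.re = ‖s‖ * Real.cos (((π:ℂ)/p).arg * (1/2)) := by
        rw [hs', Complex.cpow_def_of_ne_zero (pip_ne hp), Complex.exp_re, Complex.norm_exp]
        congr 2
        · simp [Complex.log_im, Complex.mul_im]; 
      rw [harg]
      apply mul_nonneg (norm_nonneg _)
      apply Real.cos_nonneg_of_mem_Icc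
      have := Complex.arg_le_pi (π/p); have := Complex.neg_pi_lt_arg (π/p)
      constructor <;> linarith
    have h2 : s.re^2 - s.im^2 > 0 := by
      rw [← hs] at h0; simp [sq, Complex.mul_re] at h0 ⊢; exact h0
    have h3 : |s.im| < s.re := abs_lt_of_sq_lt_sq (by linarith) h1
    exact ⟨lt_of_le_of_lt (abs_nonneg _) h3, h3⟩
  obtain ⟨a1, a2⟩ := key p hp
  obtain ⟨b1, b2⟩ := key q hq
  apply eq_of_sq_re
  · rw [mul_pow, half_sq, half_sq, div_pow, ← h]
    rw [div_mul_div_comm]; ring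
  · rw [Complex.mul_re]
    have := abs_mul ((π / p) ^ (1 / 2 : ℂ)).im ((π / q) ^ (1 / 2 : ℂ)).im
    have h4 := le_abs_self (((π / p) ^ (1 / 2 : ℂ)).im * ((π / q) ^ (1 / 2 : ℂ)).im)
    have h5 := mul_lt_mul'' a2 b2 (abs_nonneg _) (abs_nonneg _)
    linarith
  · rw [Complex.div_re]; simp
    have : 0 < Complex.normSq r := Complex.normSq_pos.2 (by rintro rfl; simp at hr)
    positivity


noncomputable def c6 : ℂ := Complex.exp (π * Complex.I / 6)
noncomputable def d6 : ℂ := Complex.exp (-(π : ℂ) * Complex.I / 6)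

lemma c6_d6 : c6 * d6 = 1 := by
  rw [c6, d6, ← Complex.exp_add, ← Complex.exp_zero]; congr 1; ring
lemma c6_sq : c6 ^ 2 = cc := by
  rw [c6, cc, ← Complex.exp_nat_mul]; congr 1; push_cast; ring
lemma d6_sq : d6 ^ 2 = cb := by
  rw [d6, cb, ← Complex.exp_nat_mul]; congr 1; push_cast; ring
lemma om_cc : ωc = cc ^ 2 := by
  rw [ωc, cc, ← Complex.exp_nat_mul]; congr 1; push_cast; ring
lemma c6_eq : c6 = (√3 / 2 : ℝ) + (1/2 : ℝ) * Complex.I := by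
  rw [c6, show (π:ℂ) * Complex.I / 6 = ((π/6 : ℝ) : ℂ) * Complex.I by push_cast; ring, Complex.exp_mul_I,
    ← Complex.ofReal_cos, ← Complex.ofReal_sin, Real.cos_pi_div_six, Real.sin_pi_div_six]
lemma d6_eq : d6 = (√3 / 2 : ℝ) - (1/2 : ℝ) * Complex.I := by
  rw [d6, show -(π:ℂ) * Complex.I / 6 = ((-(π/6) : ℝ) : ℂ) * Complex.I by push_cast; ring, Complex.exp_mul_I,
    ← Complex.ofReal_cos, ← Complex.ofReal_sin, Real.cos_neg, Real.sin_neg, Real.cos_pi_div_six, Real.sin_pi_div_six]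
  push_cast; ring
lemma c6_cube : c6 ^ 3 = Complex.I := by
  rw [c6, ← Complex.exp_nat_mul, show ((3:ℕ):ℂ) * (π * Complex.I / 6) = π / 2 * Complex.I by push_cast; ring, Complex.exp_pi_div_two_mul_I]
lemma d6_cube : d6 ^ 3 = -Complex.I := by
  rw [d6, ← Complex.exp_nat_mul, show ((3:ℕ):ℂ) * (-(π:ℂ) * Complex.I / 6) = -(π / 2 * Complex.I) by push_cast; ring, Complex.exp_neg, Complex.exp_pi_div_two_mul_I, Complex.inv_I]
lemma norm_c6 : ‖c6‖ = 1 := by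
  rw [c6, show (π:ℂ) * Complex.I / 6 = ((π/6 : ℝ) : ℂ) * Complex.I by push_cast; ring, Complex.norm_exp_ofReal_mul_I]
lemma norm_d6 : ‖d6‖ = 1 := by
  rw [d6, show -(π:ℂ) * Complex.I / 6 = ((-(π/6) : ℝ) : ℂ) * Complex.I by push_cast; ring, Complex.norm_exp_ofReal_mul_I]

noncomputable def uu (f : ℝ) (z : ℂ) : ℂ := Ai (-ωc * z * ((f ^ (-(2 : ℝ) / 3) : ℝ) : ℂ))
noncomputable def ss (f : ℝ) (z : ℂ) : ℂ := Ai (-z * ((f ^ (-(2 : ℝ) / 3) : ℝ) : ℂ))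
noncomputable def vv (f : ℝ) (z : ℂ) : ℂ := Ai (cc * z * ((f ^ (-(2 : ℝ) / 3) : ℝ) : ℂ))

lemma conn (f : ℝ) (z : ℂ) : ss f z = - ωc * uu f z + cc * vv f z := by
  have h3 := cc_cube
  have hcb : cb = -cc ^ 2 := by
    have := cc_mul_cb
    linear_combination cb * h3 - cc^2 * this
  rw [ss, uu, vv, Ai_eq, Ai_eq, Ai_eq, om_cc, hcb]
  set x := z * ((f ^ (-(2 : ℝ) / 3) : ℝ) : ℂ)
  have e1 : cc * (-z * ((f ^ (-(2 : ℝ) / 3) : ℝ) : ℂ)) = -cc * x := by ring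
  have e2 : -cc^2 * (-z * ((f ^ (-(2 : ℝ) / 3) : ℝ) : ℂ)) = cc^2 * x := by ring
  have e3 : cc * (-cc^2 * z * ((f ^ (-(2 : ℝ) / 3) : ℝ) : ℂ)) = x := by linear_combination (-x) * h3
  have e4 : -cc^2 * (-cc^2 * z * ((f ^ (-(2 : ℝ) / 3) : ℝ) : ℂ)) = -cc * x := by linear_combination (cc * x) * h3
  have e5 : cc * (cc * z * ((f ^ (-(2 : ℝ) / 3) : ℝ) : ℂ)) = cc^2 * x := by ring
  have e6 : -cc^2 * (cc * z * ((f ^ (-(2 : ℝ) / 3) : ℝ) : ℂ)) = x := by linear_combination (-x) * h3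
  rw [e1, e2, e3, e4, e5, e6]
  have h5 : (π : ℂ) ≠ 0 := by exact_mod_cast Real.pi_ne_zero
  linear_combination (1 / (2 * π * Complex.I)) * (cc * HH (-cc * x)) * h3

noncomputable def SS (f : ℝ) (z : ℂ) : ℂ := uu f z ^ 2 / Wf f
noncomputable def PP (f : ℝ) (z : ℂ) : ℂ := uu f z * vv f z / Wf f
noncomputable def TT (f : ℝ) (z : ℂ) : ℂ := vv f z ^ 2 / Wf f

/-- the determinant as a polynomial -/
noncomputable def Dpoly (η S1 P1 T1 S2 P2 : ℂ) : ℂ :=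
  1 + cc * (P1 + P2) / η + ωc * (P1 * P2 - S2 * T1) / η ^ 2 - ωc * (S1 + S2) / η + (S1 * P2 - S2 * P1) / η ^ 2

lemma Df_eq (κ η f : ℝ) (z : ℂ) : Df κ η f z = Dpoly η (SS f (z - κ * f)) (PP f (z - κ * f)) (TT f (z - κ * f))
    (SS f (z + κ * f)) (PP f (z + κ * f)) := by
  have h1 := conn f (z - κ * f)
  have h2 := conn f (z + κ * f)
  have ho : ωc * cc = -1 := by rw [om_cc]; linear_combination cc_cube
  have ho2 : cc ^ 2 = ωc := om_cc.symm
  have : Df κ η f z = 1 + (uu f (z - κ * f) * ss f (z - κ * f) + uu f (z + κ * f) * ss f (z + κ * f)) / (η * Wf f)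
    + (uu f (z + κ * f) * ss f (z - κ * f)) * (uu f (z - κ * f) * ss f (z + κ * f) - uu f (z + κ * f) * ss f (z - κ * f)) / (η ^ 2 * (Wf f) ^ 2) := rfl
  rw [this, h1, h2]
  simp only [Dpoly, SS, PP, TT]
  set u1 := uu f (z - κ * f)
  set u2 := uu f (z + κ * f)
  set v1 := vv f (z - κ * f)
  set v2 := vv f (z + κ * f)
  have e : (u2 * (-ωc * u1 + cc * v1)) * (u1 * (-ωc * u2 + cc * v2) - u2 * (-ωc * u1 + cc * v1))
     = u1 * u2 * (u1 * v2 - u2 * v1) + ωc * (u2 * v1) * (u1 * v2 - u2 * v1) := by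
    linear_combination (-u2*u1*(u1*v2-u2*v1)) * ho + u2*v1*(u1*v2-u2*v1)*ho2
  rw [e]
  ring

lemma Wf_eq {f : ℝ} : Wf f = ((f ^ ((1 : ℝ) / 3) : ℝ) : ℂ) * d6 / (2 * π) := rfl

lemma uv_asym {f : ℝ} (hf : 0 < f) {q : ℂ} (hq : 0 < q.re) (hi : q.im ≤ 0) (hi2 : -q.re ≤ q.im) :
    ∃ a b : ℂ, ‖a‖ ≤ 6 * √(f / ‖q‖ ^ 3) ∧ ‖b‖ ≤ 6 * √(f / ‖q‖ ^ 3) ∧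
      SS f (q ^ 2) = cc / (2 * q) * Complex.exp (4 / 3 * Complex.I * q ^ 3 / f) * (1 + a) ^ 2 ∧
      PP f (q ^ 2) = c6 / (2 * q) * ((1 + a) * (1 + b)) ∧
      TT f (q ^ 2) = 1 / (2 * q) * Complex.exp (-(4 / 3 * Complex.I * q ^ 3 / f)) * (1 + b) ^ 2 := by
  set g : ℝ := f ^ ((1:ℝ)/3) with hg
  have hg0 : 0 < g := by positivity
  have hg3 : g ^ 3 = f := by
    rw [hg, ← Real.rpow_natCast, ← Real.rpow_mul hf.le]; norm_num
  have hg2 : f ^ (-(2:ℝ)/3) = 1 / g^2 := by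
    rw [hg, ← Real.rpow_natCast, ← Real.rpow_mul hf.le, one_div, ← Real.rpow_neg hf.le]; norm_num
  have hgc : (g:ℂ) ≠ 0 := by exact_mod_cast hg0.ne'
  have hq0 : q ≠ 0 := by rintro rfl; simp at hq
  have hqn : 0 < ‖q‖ := norm_pos_iff.2 hq0
  have h5 : (π : ℂ) ≠ 0 := by exact_mod_cast Real.pi_ne_zero
  have h3 : √3 ^ 2 = 3 := Real.sq_sqrt (by norm_num)
  have h3a : 1.7 ≤ √3 := Real.le_sqrt_of_sq_le (by norm_num)
  have hqle : ‖q‖ ≤ 1.42 * q.re := by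
    rw [Complex.norm_eq_sqrt_sq_add_sq]
    apply Real.sqrt_le_iff.2
    constructor
    · positivity
    · nlinarith
  have hpu : (d6 * q / g).re = (√3/2 * q.re + 1/2 * q.im) / g := by
    rw [Complex.div_ofReal_re, d6_eq]; simp
  have hpv : (c6 * q / g).re = (√3/2 * q.re - 1/2 * q.im) / g := by
    rw [Complex.div_ofReal_re, c6_eq]; simp
  have hnu : ‖d6 * q / g‖ = ‖q‖ / g := by simp [norm_d6, abs_of_pos hg0]
  have hnv : ‖c6 * q / g‖ = ‖q‖ / g := by simp [norm_c6, abs_of_pos hg0]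
  have hpu0 : 0 < (d6 * q / g).re := by rw [hpu]; apply div_pos _ hg0; nlinarith
  have hpv0 : 0 < (c6 * q / g).re := by rw [hpv]; apply div_pos _ hg0; nlinarith
  have hcu : ‖d6 * q / g‖ ≤ 4 * (d6 * q / g).re := by
    rw [hpu, hnu, ← mul_div_assoc]; gcongr; nlinarith
  have hcv : ‖c6 * q / g‖ ≤ 4 * (c6 * q / g).re := by
    rw [hpv, hnv, ← mul_div_assoc]; gcongr; nlinarith
  have hbu := eps_bound hpu0 hcu
  have hbv := eps_bound hpv0 hcv
  have hrr : 1 / (‖q‖/g)^3 = f / ‖q‖^3 := by rw [← hg3]; field_simp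
  rw [hnu, hrr] at hbu
  rw [hnv, hrr] at hbv
  have hfc : (f:ℂ) = (g:ℂ)^3 := by rw [← hg3]; push_cast; ring
  have d0 : d6 ≠ 0 := right_ne_zero_of_mul_eq_one c6_d6
  have c0 : c6 ≠ 0 := left_ne_zero_of_mul_eq_one c6_d6
  have hom : -ωc = cb := by
    rw [om_cc]; have := cc_mul_cb
    linear_combination -cb * cc_cube + cc^2 * this
  set a := epsG (d6 * q / g) with ha
  set b := epsG (c6 * q / g) with hb
  have hu : uu f (q^2) = Complex.exp (2/3 * Complex.I * q^3 / f) / π * ((π / (d6 * q / g)) ^ (1/2:ℂ) / 2 * (1 + a)) := by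
    rw [ha, ← GG_eps hpu0, uu, hg2, hom, ← d6_sq]
    have := Ai_GG hpu0
    rw [show d6^2 * q^2 * ((1/g^2 : ℝ):ℂ) = (d6 * q / g)^2 by push_cast; ring, this, hfc]
    congr 3
    rw [div_pow, mul_pow, d6_cube]; field_simp
  have hv : vv f (q^2) = Complex.exp (-(2/3 * Complex.I * q^3 / f)) / π * ((π / (c6 * q / g)) ^ (1/2:ℂ) / 2 * (1 + b)) := by
    rw [hb, ← GG_eps hpv0, vv, hg2, ← c6_sq]
    have := Ai_GG hpv0
    rw [show c6^2 * q^2 * ((1/g^2 : ℝ):ℂ) = (c6 * q / g)^2 by push_cast; ring, this, hfc]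
    congr 3
    rw [div_pow, mul_pow, c6_cube]; field_simp
  have hqg : 0 < (q / g).re := by rw [Complex.div_ofReal_re]; positivity
  have hprod := half_prod hpu0 hpv0 hqg (by linear_combination (q^2/g^2) * c6_d6)
  have hsu := half_sq (π / (d6 * q / g))
  have hsv := half_sq (π / (c6 * q / g))
  set X := (π / (d6 * q / g)) ^ (1/2:ℂ)
  set Y := (π / (c6 * q / g)) ^ (1/2:ℂ)
  refine ⟨a, b, hbu, hbv, ?_, ?_, ?_⟩
  · rw [SS, hu, Wf_eq, ← hg]
    have e : Complex.exp (4 / 3 * Complex.I * q ^ 3 / f) = Complex.exp (2/3 * Complex.I * q^3 / f) ^ 2 := by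
      rw [← Complex.exp_nat_mul]; congr 1; push_cast; ring
    rw [e, ← c6_sq, show (Complex.exp (2/3 * Complex.I * q^3 / f) / π * (X / 2 * (1 + a)))^2 = Complex.exp (2/3 * Complex.I * q^3 / f)^2 / π ^ 2 * (X^2 / 4 * (1+a)^2) by ring, hsu]
    field_simp
    linear_combination (-4*(1+a)^2*(c6*d6+1)) * c6_d6
  · rw [PP, hu, hv, Wf_eq, ← hg]
    have e : Complex.exp (2/3 * Complex.I * q^3 / f) * Complex.exp (-(2/3 * Complex.I * q^3 / f)) = 1 := by
      rw [← Complex.exp_add, ← Complex.exp_zero]; congr 1; ring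
    rw [show (Complex.exp (2/3 * Complex.I * q^3 / f) / π * (X / 2 * (1 + a))) * (Complex.exp (-(2/3 * Complex.I * q^3 / f)) / π * (Y / 2 * (1 + b)))
      = (Complex.exp (2/3 * Complex.I * q^3 / f) * Complex.exp (-(2/3 * Complex.I * q^3 / f))) / π^2 * ((X * Y) / 4 * ((1 + a) * (1 + b))) by ring, e, hprod]
    field_simp
    linear_combination (-4*(1+a)*(1+b)) * c6_d6
  · rw [TT, hv, Wf_eq, ← hg]
    have e : Complex.exp (-(4 / 3 * Complex.I * q ^ 3 / f)) = Complex.exp (-(2/3 * Complex.I * q^3 / f)) ^ 2 := by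
      rw [← Complex.exp_nat_mul]; congr 1; push_cast; ring
    rw [e, show (Complex.exp (-(2/3 * Complex.I * q^3 / f)) / π * (Y / 2 * (1 + b)))^2 = Complex.exp (-(2/3 * Complex.I * q^3 / f))^2 / π ^ 2 * (Y^2 / 4 * (1+b)^2) by ring, hsv]
    field_simp
    linear_combination (-4*(1+b)^2) * c6_d6

open Filter Topology in
lemma asym_lim {ι : Type*} {l : Filter ι} [NeBot l] {f : ι → ℝ} {q : ι → ℂ} {k : ℝ} (hk : 0 < k)
    (hf : Tendsto f l (𝓝 0)) (hf0 : ∀ᶠ i in l, 0 < f i) (hq : Tendsto q l (𝓝 (k:ℂ))) (hi : ∀ᶠ i in l, (q i).im ≤ 0) :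
    Tendsto (fun i => SS (f i) (q i ^ 2) * Complex.exp (-(4 / 3 * Complex.I * q i ^ 3 / f i))) l (𝓝 (cc / (2 * k))) ∧
    Tendsto (fun i => PP (f i) (q i ^ 2)) l (𝓝 (c6 / (2 * k))) ∧
    Tendsto (fun i => TT (f i) (q i ^ 2) * Complex.exp (4 / 3 * Complex.I * q i ^ 3 / f i)) l (𝓝 (1 / (2 * k))) := by
  have hkc : (k:ℂ) ≠ 0 := by exact_mod_cast hk.ne'
  have hre : Tendsto (fun i => (q i).re) l (𝓝 k) := by
    simpa [Function.comp_def, -one_div] using (Complex.continuous_re.tendsto _).comp hq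
  have him : Tendsto (fun i => (q i).im) l (𝓝 0) := by
    simpa [Function.comp_def] using (Complex.continuous_im.tendsto _).comp hq
  have h1 : ∀ᶠ i in l, 0 < (q i).re := hre.eventually (lt_mem_nhds hk)
  have h2 : ∀ᶠ i in l, -(q i).re < (q i).im := hre.neg.eventually_lt him (by linarith)
  have hex : ∀ᶠ i in l, ∃ ab : ℂ × ℂ, ‖ab.1‖ ≤ 6 * √(f i / ‖q i‖ ^ 3) ∧ ‖ab.2‖ ≤ 6 * √(f i / ‖q i‖ ^ 3) ∧
      SS (f i) (q i ^ 2) = cc / (2 * q i) * Complex.exp (4 / 3 * Complex.I * q i ^ 3 / f i) * (1 + ab.1) ^ 2 ∧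
      PP (f i) (q i ^ 2) = c6 / (2 * q i) * ((1 + ab.1) * (1 + ab.2)) ∧
      TT (f i) (q i ^ 2) = 1 / (2 * q i) * Complex.exp (-(4 / 3 * Complex.I * q i ^ 3 / f i)) * (1 + ab.2) ^ 2 := by
    filter_upwards [h1, h2, hi, hf0] with i a1 a2 a3 a4
    obtain ⟨a, b, h⟩ := uv_asym a4 a1 a3 a2.le
    exact ⟨(a, b), h⟩
  obtain ⟨ab, hab⟩ := hex.choice
  have hz : Tendsto (fun i => 6 * √(f i / ‖q i‖ ^ 3)) l (𝓝 0) := by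
    have : Tendsto (fun i => 6 * √(f i / ‖q i‖ ^ 3)) l (𝓝 (6 * √(0 / ‖(k:ℂ)‖ ^ 3))) :=
      ((hf.div (hq.norm.pow 3) (by simp [hk.ne'])).sqrt).const_mul 6
    simpa using this
  have ha : Tendsto (fun i => (ab i).1) l (𝓝 0) :=
    squeeze_zero_norm' (hab.mono fun i h => h.1) hz
  have hb : Tendsto (fun i => (ab i).2) l (𝓝 0) :=
    squeeze_zero_norm' (hab.mono fun i h => h.2.1) hz
  have h2q : Tendsto (fun i => 2 * q i) l (𝓝 (2 * k)) := hq.const_mul 2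
  have h2k : (2:ℂ) * k ≠ 0 := by simp [hkc]
  have hexp : ∀ x : ℂ, Complex.exp x * Complex.exp (-x) = 1 := by
    intro x; rw [← Complex.exp_add]; simp
  refine ⟨?_, ?_, ?_⟩
  · have : Tendsto (fun i => cc / (2 * q i) * (1 + (ab i).1)^2) l (𝓝 (cc / (2 * k) * (1 + 0)^2)) :=
      (tendsto_const_nhds.div h2q h2k).mul ((ha.const_add 1).pow 2)
    simp only [add_zero, one_pow, mul_one] at this
    refine this.congr' (hab.mono fun i h => ?_)
    simp only [h.2.2.1]
    linear_combination (-(cc / (2 * q i) * (1 + (ab i).1)^2)) * hexp (4 / 3 * Complex.I * q i ^ 3 / f i)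
  · have : Tendsto (fun i => c6 / (2 * q i) * ((1 + (ab i).1) * (1 + (ab i).2))) l (𝓝 (c6 / (2 * k) * ((1 + 0) * (1+0)))) :=
      (tendsto_const_nhds.div h2q h2k).mul ((ha.const_add 1).mul (hb.const_add 1))
    simp only [add_zero, mul_one] at this
    exact this.congr' (hab.mono fun i h => h.2.2.2.1.symm)
  · have : Tendsto (fun i => 1 / (2 * q i) * (1 + (ab i).2)^2) l (𝓝 ((1:ℂ) / (2 * k) * (1 + 0)^2)) :=
      (tendsto_const_nhds.div h2q h2k).mul ((hb.const_add 1).pow 2)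
    simp only [add_zero, one_pow, mul_one] at this
    refine this.congr' (hab.mono fun i h => ?_)
    simp only [h.2.2.2.2]
    linear_combination (-(1 / (2 * q i) * (1 + (ab i).2)^2)) * hexp (4 / 3 * Complex.I * q i ^ 3 / f i)

open Filter Topology in
lemma shift_lim {ι : Type*} {l : Filter ι} [NeBot l] {f : ι → ℝ} {q : ι → ℂ} {k : ℝ} (hk : 0 < k) (c : ℝ)
    (hf : Tendsto f l (𝓝 0)) (hf0 : ∀ᶠ i in l, 0 < f i) (hq : Tendsto q l (𝓝 (k:ℂ))) (hi : ∀ᶠ i in l, (q i).im ≤ 0) :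
    ∃ q1 : ι → ℂ, (∀ i, q1 i ^ 2 = q i ^ 2 + c * f i) ∧ Tendsto q1 l (𝓝 (k:ℂ)) ∧ (∀ᶠ i in l, (q1 i).im ≤ 0) ∧
     Tendsto (fun i => Complex.exp (4 / 3 * Complex.I * q1 i ^ 3 / f i) * Complex.exp (-(4 / 3 * Complex.I * q i ^ 3 / f i))) l
      (𝓝 (Complex.exp (2 * Complex.I * c * k))) := by
  have hkc : (k:ℂ) ≠ 0 := by exact_mod_cast hk.ne'
  have hfc : Tendsto (fun i => (f i : ℂ)) l (𝓝 0) := by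
    simpa [Function.comp_def] using (Complex.continuous_ofReal.tendsto 0).comp hf
  have hq2 : Tendsto (fun i => q i ^ 2 + c * f i) l (𝓝 ((k:ℂ)^2)) := by
    simpa using (hq.pow 2).add (hfc.const_mul (c:ℂ))
  have hq1 : Tendsto (fun i => (q i ^ 2 + c * f i) ^ (1/2:ℂ)) l (𝓝 (k:ℂ)) := by
    have h := hq2.cpow (tendsto_const_nhds (x := (1/2:ℂ))) (by
      left; rw [← Complex.ofReal_pow, Complex.ofReal_re]; positivity)
    have e : ((k:ℂ)^2) ^ (1/2:ℂ) = k := by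
      rw [← Complex.ofReal_pow, show (1/2:ℂ) = ((1/2:ℝ):ℂ) by push_cast; ring, ← Complex.ofReal_cpow (by positivity), ← Real.sqrt_eq_rpow, Real.sqrt_sq hk.le]
    rwa [e] at h
  have hre : Tendsto (fun i => (q i).re) l (𝓝 k) := by
    simpa [Function.comp_def, -one_div] using (Complex.continuous_re.tendsto _).comp hq
  have hre1 : Tendsto (fun i => ((q i ^ 2 + c * f i) ^ (1/2:ℂ)).re) l (𝓝 k) := by
    simpa [Function.comp_def, -one_div] using (Complex.continuous_re.tendsto _).comp hq1
  have p0 : ∀ᶠ i in l, 0 < (q i).re := hre.eventually (lt_mem_nhds hk)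
  have p1 : ∀ᶠ i in l, 0 < ((q i ^ 2 + c * f i) ^ (1/2:ℂ)).re := hre1.eventually (lt_mem_nhds hk)
  refine ⟨fun i => (q i ^ 2 + c * f i) ^ (1/2:ℂ), fun i => half_sq _, hq1, ?_, ?_⟩
  · filter_upwards [p0, p1, hi] with i a0 a1 a2
    have := congrArg Complex.im (half_sq (q i ^ 2 + c * f i))
    generalize (q i ^ 2 + c * f i) ^ (1/2:ℂ) = x at *
    rw [sq, Complex.mul_im] at this
    simp [sq, -one_div] at this
    nlinarith
  · have hlim : Tendsto (fun i => 4/3 * Complex.I * (c * (((q i ^ 2 + c * f i) ^ (1/2:ℂ))^2 + (q i ^ 2 + c * f i) ^ (1/2:ℂ) * q i + q i ^2) / ((q i ^ 2 + c * f i) ^ (1/2:ℂ) + q i))) l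
       (𝓝 (4/3 * Complex.I * (c * ((k:ℂ)^2 + k * k + k^2) / (k + k)))) := by
      refine Tendsto.const_mul _ (Tendsto.div ?_ (hq1.add hq) ?_)
      · exact (((hq1.pow 2).add (hq1.mul hq)).add (hq.pow 2)).const_mul _
      · rw [← two_mul]; simp [hkc]
    have h2 := (Complex.continuous_exp.tendsto _).comp hlim
    rw [show 4/3 * Complex.I * (c * ((k:ℂ)^2 + k * k + k^2) / (k + k)) = 2 * Complex.I * c * k by
      rw [← two_mul]; field_simp; ring] at h2
    refine h2.congr' ?_
    filter_upwards [p0, p1, hf0] with i a0 a1 a2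
    simp only [Function.comp_apply]
    have hs := half_sq (q i ^ 2 + c * f i)
    set x := (q i ^ 2 + c * f i) ^ (1/2:ℂ)
    have hne : x + q i ≠ 0 := by
      intro h; have := congrArg Complex.re h; simp at this; linarith
    have hfne : (f i : ℂ) ≠ 0 := by exact_mod_cast a2.ne'
    rw [← Complex.exp_add]
    congr 1
    field_simp
    linear_combination (-(x^2 + x * q i + q i ^2)) * hs

noncomputable def AA (κ η k : ℝ) : ℂ := (1 + Complex.I * (1 / (2 * k * η) : ℝ)) ^ 2 + ((1 / (2 * k * η) : ℝ) : ℂ) ^ 2 * Complex.exp (4 * Complex.I * κ * k)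
noncomputable def BB (κ η k : ℝ) : ℝ := 2 * (1 / (2 * k * η)) * Real.cos (2 * κ * k) + 2 * (1 / (2 * k * η)) ^ 2 * Real.sin (2 * κ * k)

lemma AABB (κ η k : ℝ) : ‖AA κ η k‖ ^ 2 = 1 + BB κ η k ^ 2 := by
  rw [AA, BB]
  set g := 1 / (2 * k * η)
  rw [show 4 * Complex.I * κ * k = ((4 * κ * k : ℝ) : ℂ) * Complex.I by push_cast; ring, Complex.exp_mul_I, ← Complex.ofReal_cos, ← Complex.ofReal_sin,
    show 4 * κ * k = 2 * (2 * κ * k) by ring, Real.cos_two_mul, Real.sin_two_mul]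
  have h := Real.sin_sq_add_cos_sq (2 * κ * k)
  set c := Real.cos (2 * κ * k)
  set s := Real.sin (2 * κ * k)
  rw [← Complex.normSq_eq_norm_sq, Complex.normSq_apply]
  simp [sq]
  have h' : s^2 = 1 - c^2 := by linarith
  ring_nf
  rw [h']
  ring_nf

lemma idA (k η e : ℂ) (hkc : k ≠ 0) (hηc : η ≠ 0) (ho : ωc * cc = -1) : 1 + cc * (c6 / (2 * k) + c6 / (2 * k)) / η + ωc * (c6 / (2 * k) * (c6 / (2 * k)) - cc / (2 * k) * (1 / (2 * k)) * e) / (η:ℂ) ^ 2 = (1 + Complex.I * (1 / (2 * k * η))) ^ 2 + (1 / (2 * k * η)) ^ 2 * e := by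
    have h3 := c6_cube
    have h2 := c6_sq
    field_simp
    rw [← h2] at ho ⊢
    ring_nf
    rw [c6_cube, Complex.I_sq]
    linear_combination (1 - e) * ho
lemma idB (k η c s : ℂ) (hkc : k ≠ 0) (hηc : η ≠ 0) (ho : ωc * cc = -1) :
  -(ωc * (cc / (2 * k) * (c - s * Complex.I) + cc / (2 * k) * (c + s * Complex.I)) / η)
     + (cc / (2 * k) * (c - s * Complex.I) * (c6 / (2 * k)) - cc / (2 * k) * (c + s * Complex.I) * (c6 / (2 * k))) / (η:ℂ)^2 =
     2 * (1 / (2 * k * η)) * c + 2 * (1 / (2 * k * η)) ^ 2 * s := by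
    have h3 := c6_cube
    have h2 := c6_sq
    field_simp
    rw [← h2] at ho ⊢
    ring_nf
    rw [c6_cube]
    linear_combination (-4 * k * η * c) * ho - 2 * s * Complex.I_sq

open Filter Topology in
lemma limL {ι : Type*} {l : Filter ι} [NeBot l] {f : ι → ℝ} {q : ι → ℂ} {k κ η C : ℝ} (hk : 0 < k) (hη : 0 < η)
    (hf : Tendsto f l (𝓝 0)) (hf0 : ∀ᶠ i in l, 0 < f i) (hq : Tendsto q l (𝓝 (k:ℂ))) (hi : ∀ᶠ i in l, (q i).im ≤ 0)
    (hE : ∀ᶠ i in l, ‖Complex.exp (4 / 3 * Complex.I * q i ^ 3 / f i)‖ ≤ C) :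
    Tendsto (fun i => Df κ η (f i) (q i ^ 2) - (AA κ η k + BB κ η k * Complex.exp (4 / 3 * Complex.I * q i ^ 3 / f i))) l (𝓝 0) := by
  have hkc : (k:ℂ) ≠ 0 := by exact_mod_cast hk.ne'
  have hηc : (η:ℂ) ≠ 0 := by exact_mod_cast hη.ne'
  obtain ⟨q1, a1, a2, a3, a4⟩ := shift_lim hk (-κ) hf hf0 hq hi
  obtain ⟨q2, b1, b2, b3, b4⟩ := shift_lim hk κ hf hf0 hq hi
  obtain ⟨hS1, hP1, hT1⟩ := asym_lim hk hf hf0 a2 a3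
  obtain ⟨hS2, hP2, hT2⟩ := asym_lim hk hf hf0 b2 b3
  have a5 := a4.inv₀ (Complex.exp_ne_zero _)
  have hA := (((hP1.add hP2).const_mul cc).div_const (η:ℂ)).const_add 1 |>.add
    ((((hP1.mul hP2).sub ((hS2.mul hT1).mul (b4.mul a5))).const_mul ωc).div_const ((η:ℂ)^2))
  have hB := ((((hS1.mul a4).add (hS2.mul b4)).const_mul ωc).div_const (η:ℂ)).neg.add
    ((((hS1.mul a4).mul hP2).sub ((hS2.mul b4).mul hP1)).div_const ((η:ℂ)^2))
  have ho : ωc * cc = -1 := by rw [om_cc]; linear_combination cc_cube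
  have e1 : Complex.exp (2 * Complex.I * ((-κ:ℝ):ℂ) * k) = Complex.cos (2 * κ * k) - Complex.sin (2 * κ * k) * Complex.I := by
    rw [show 2 * Complex.I * ((-κ:ℝ):ℂ) * k = (-(2 * κ * k)) * Complex.I by push_cast; ring, Complex.exp_mul_I, Complex.cos_neg, Complex.sin_neg]; ring
  have e2 : Complex.exp (2 * Complex.I * κ * k) = Complex.cos (2 * κ * k) + Complex.sin (2 * κ * k) * Complex.I := by
    rw [show 2 * Complex.I * κ * k = (2 * κ * k) * Complex.I by ring, Complex.exp_mul_I]
  have e3 : Complex.exp (2 * Complex.I * κ * k) * (Complex.exp (2 * Complex.I * ((-κ:ℝ):ℂ) * k))⁻¹ = Complex.exp (4 * Complex.I * κ * k) := by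
    rw [← Complex.exp_neg, ← Complex.exp_add]; congr 1; push_cast; ring
  rw [e3] at hA
  have hA' : 1 + cc * (c6 / (2 * k) + c6 / (2 * k)) / η + ωc * (c6 / (2 * k) * (c6 / (2 * k)) - cc / (2 * k) * (1 / (2 * k)) * Complex.exp (4 * Complex.I * κ * k)) / (η:ℂ) ^ 2 = AA κ η k := by
    rw [idA _ _ _ hkc hηc ho, AA]; push_cast; rfl
  have hB' : -(ωc * (cc / (2 * k) * Complex.exp (2 * Complex.I * ((-κ:ℝ):ℂ) * k) + cc / (2 * k) * Complex.exp (2 * Complex.I * κ * k)) / η)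
     + (cc / (2 * k) * Complex.exp (2 * Complex.I * ((-κ:ℝ):ℂ) * k) * (c6 / (2 * k)) - cc / (2 * k) * Complex.exp (2 * Complex.I * κ * k) * (c6 / (2 * k))) / (η:ℂ)^2 = BB κ η k := by
    rw [e1, e2, idB _ _ _ _ hkc hηc ho, BB]; push_cast; rfl
  rw [hA'] at hA
  rw [hB'] at hB
  have hA0 := hA.sub_const (AA κ η k)
  have hB0 := hB.sub_const (BB κ η k : ℂ)
  rw [sub_self] at hA0 hB0
  have hB1 := hB0.zero_mul_isBoundedUnder_le (g := fun i => Complex.exp (4 / 3 * Complex.I * q i ^ 3 / f i)) ⟨C, by simpa using hE⟩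
  have hfin := hA0.add hB1
  rw [add_zero] at hfin
  refine hfin.congr' (Eventually.of_forall fun i => ?_)
  beta_reduce
  clear hA hB hA0 hB0 hB1 hfin hA' hB' hS1 hS2 hP1 hP2 hT1 hT2 a4 a5 b4 e1 e2 e3 hE
  rw [Df_eq, Dpoly, show q i ^2 - κ * f i = q1 i ^ 2 by rw [a1]; push_cast; ring, ← b1]
  have n1 : Complex.exp (-(4 / 3 * Complex.I * q1 i ^ 3 / f i)) ≠ 0 := Complex.exp_ne_zero _
  simp only [Complex.exp_neg]
  have n1 : Complex.exp ((4 / 3 * Complex.I * q1 i ^ 3 / f i)) ≠ 0 := Complex.exp_ne_zero _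
  have n2 : Complex.exp ((4 / 3 * Complex.I * q2 i ^ 3 / f i)) ≠ 0 := Complex.exp_ne_zero _
  have n0 : Complex.exp ((4 / 3 * Complex.I * q i ^ 3 / f i)) ≠ 0 := Complex.exp_ne_zero _
  generalize Complex.exp ((4 / 3 * Complex.I * q1 i ^ 3 / f i)) = E1 at *
  generalize Complex.exp ((4 / 3 * Complex.I * q2 i ^ 3 / f i)) = E2 at *
  generalize Complex.exp ((4 / 3 * Complex.I * q i ^ 3 / f i)) = E at *
  field_simp
  ring

open Filter Topology in
lemma limL_eps {k κ η : ℝ} (hk : 0 < k) (hη : 0 < η) (C ε : ℝ) (hε : 0 < ε) :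
    ∃ δ > 0, ∀ f : ℝ, 0 < f → f < δ → ∀ q : ℂ, ‖q - k‖ < δ → q.im ≤ 0 →
      ‖Complex.exp (4 / 3 * Complex.I * q ^ 3 / f)‖ ≤ C →
      ‖Df κ η f (q ^ 2) - (AA κ η k + BB κ η k * Complex.exp (4 / 3 * Complex.I * q ^ 3 / f))‖ < ε := by
  set T : Set (ℝ × ℂ) := {x | 0 < x.1 ∧ x.2.im ≤ 0 ∧ ‖Complex.exp (4 / 3 * Complex.I * x.2 ^ 3 / x.1)‖ ≤ C} with hT
  have key : ∀ᶠ x : ℝ × ℂ in 𝓝[T] (0, (k:ℂ)),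
      ‖Df κ η x.1 (x.2 ^ 2) - (AA κ η k + BB κ η k * Complex.exp (4 / 3 * Complex.I * x.2 ^ 3 / x.1))‖ < ε := by
    rcases (𝓝[T] ((0:ℝ), (k:ℂ))).eq_or_neBot with h | h
    · rw [h]; exact eventually_bot
    · have hm : ∀ᶠ x in 𝓝[T] ((0:ℝ), (k:ℂ)), x ∈ T := self_mem_nhdsWithin
      have := limL (l := 𝓝[T] ((0:ℝ), (k:ℂ))) (f := fun x => x.1) (q := fun x => x.2) (κ := κ) (C := C) hk hη
        ((continuous_fst.tendsto' ((0:ℝ), (k:ℂ)) _ rfl).mono_left nhdsWithin_le_nhds)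
        (hm.mono fun x h => h.1)
        ((continuous_snd.tendsto' ((0:ℝ), (k:ℂ)) _ rfl).mono_left nhdsWithin_le_nhds)
        (hm.mono fun x h => h.2.1) (hm.mono fun x h => h.2.2)
      have h2 := this.norm.eventually (gt_mem_nhds (by simpa using hε))
      exact h2
  rw [eventually_nhdsWithin_iff, Metric.eventually_nhds_iff] at key
  obtain ⟨δ, hδ, h⟩ := key
  refine ⟨δ, hδ, fun f hf hfδ q hq hi hE => ?_⟩
  refine @h (f, q) ?_ ⟨hf, hi, hE⟩
  rw [Prod.dist_eq, max_lt_iff, dist_eq_norm, dist_eq_norm]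
  refine ⟨?_, hq⟩
  simpa [abs_of_pos hf] using hfδ


lemma Df_differentiable (κ η f : ℝ) : Differentiable ℂ (Df κ η f) := by
  have h := Ai_differentiable
  have hc : ∀ g : ℂ → ℂ, Differentiable ℂ g → Differentiable ℂ (fun z => Ai (g z)) := fun g hg => h.comp hg
  unfold Df alphaP alphaM betaP betaM
  have h1 : Differentiable ℂ fun z : ℂ => Ai (-ωc * (z - κ * f) * ((f ^ (-(2 : ℝ) / 3) : ℝ) : ℂ)) := hc _ (by fun_prop)
  have h2 : Differentiable ℂ fun z : ℂ => Ai (-(z - κ * f) * ((f ^ (-(2 : ℝ) / 3) : ℝ) : ℂ)) := hc _ (by fun_prop)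
  have h3 : Differentiable ℂ fun z : ℂ => Ai (-ωc * (z + κ * f) * ((f ^ (-(2 : ℝ) / 3) : ℝ) : ℂ)) := hc _ (by fun_prop)
  have h4 : Differentiable ℂ fun z : ℂ => Ai (-(z + κ * f) * ((f ^ (-(2 : ℝ) / 3) : ℝ) : ℂ)) := hc _ (by fun_prop)
  exact (((((h1.mul h2).add (h3.mul h4)).div_const _).const_add 1).add (((h3.mul h2).mul ((h1.mul h4).sub (h3.mul h2))).div_const _))

lemma exists_BB {κ η x y : ℝ} (hκ : 0 < κ) (hη : 0 < η) (hx : 0 < x) (hxy : x < y) :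
    ∃ k, x < k ∧ k < y ∧ BB κ η k ≠ 0 := by
  by_contra hcon
  push Not at hcon
  have hh : ∀ k ∈ Set.Ioo x y, 2 * k * η * Real.cos (2 * κ * k) + Real.sin (2 * κ * k) = 0 := by
    intro k hk
    have h := hcon k hk.1 hk.2
    have hk0 : 0 < k := hx.trans hk.1
    rw [BB] at h
    field_simp at h
    rw [show 2 * κ * k = 2 * k * κ by ring]; linarith
  set k := (x + y) / 2 with hkd
  have hk : k ∈ Set.Ioo x y := ⟨by linarith, by linarith⟩
  have hk0 : 0 < k := hx.trans hk.1
  have hd : HasDerivAt (fun k : ℝ => 2 * k * η * Real.cos (2 * κ * k) + Real.sin (2 * κ * k))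
      (2 * 1 * η * Real.cos (2 * κ * k) + 2 * k * η * (-Real.sin (2 * κ * k) * (2 * κ * 1)) + Real.cos (2 * κ * k) * (2 * κ * 1)) k := by
    have h1 : HasDerivAt (fun k : ℝ => 2 * κ * k) (2 * κ * 1) k := (hasDerivAt_id k).const_mul _
    have h2 : HasDerivAt (fun k : ℝ => 2 * k * η) (2 * 1 * η) k := ((hasDerivAt_id k).const_mul _).mul_const _
    exact (h2.mul h1.cos).add h1.sin
  have hz : HasDerivAt (fun k : ℝ => 2 * k * η * Real.cos (2 * κ * k) + Real.sin (2 * κ * k)) 0 k := by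
    refine (hasDerivAt_const k (0:ℝ)).congr_of_eventuallyEq ?_
    filter_upwards [isOpen_Ioo.mem_nhds hk] with t ht using hh t ht
  have e := hd.unique hz
  have e2 := hh k hk
  have e3 := Real.sin_sq_add_cos_sq (2 * κ * k)
  set c := Real.cos (2 * κ * k)
  set s := Real.sin (2 * κ * k)
  have hs : s = -2 * k * η * c := by linarith
  rw [hs] at e e3
  have : c * (2 * η + 8 * κ * k^2 * η^2 + 2 * κ) = 0 := by linarith
  have hpos : 0 < 2 * η + 8 * κ * k^2 * η^2 + 2 * κ := by positivity
  have hc : c = 0 := by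
    rcases mul_eq_zero.1 this with h | h
    · exact h
    · linarith
  rw [hc] at e3; simp at e3

lemma exists_zero_of_min {g : ℂ → ℂ} {w0 : ℂ} {r ε : ℝ} (hr : 0 < r) (hε : 0 < ε)
    (hd : DifferentiableOn ℂ g (Metric.closedBall w0 r)) (h0 : ‖g w0‖ < ε)
    (hs : ∀ w ∈ Metric.sphere w0 r, ε ≤ ‖g w‖) : ∃ w ∈ Metric.closedBall w0 r, g w = 0 := by
  by_contra hcon
  push Not at hcon
  have hcl : closure (Metric.ball w0 r) = Metric.closedBall w0 r := closure_ball _ hr.ne'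
  have hdc : DiffContOnCl ℂ g (Metric.ball w0 r) := DifferentiableOn.diffContOnCl (by rwa [hcl])
  have hinv := hdc.inv (by rwa [hcl])
  have := Complex.norm_le_of_forall_mem_frontier_norm_le Metric.isBounded_ball hinv (C := ε⁻¹) (by
    intro z hz
    rw [frontier_ball _ hr.ne'] at hz
    rw [Pi.inv_apply, norm_inv]
    exact inv_anti₀ hε (hs z hz)) (z := w0) (by rw [hcl]; simp [hr.le])
  rw [Pi.inv_apply, norm_inv] at this
  have hp : 0 < ‖g w0‖ := norm_pos_iff.2 (hcon w0 (by simp [hr.le]))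
  have := (inv_le_inv₀ hp hε).1 this
  linarith

lemma exists_disc {A : ℂ} {B : ℝ} (hB : B ≠ 0) (hAB : |B| < ‖A‖) : ∃ w0 : ℂ, ∃ r > 0, ∃ ε > 0, r ≤ 1 ∧ w0.im + r < 0 ∧
    A + B * Complex.exp (Complex.I * w0) = 0 ∧ ∀ w ∈ Metric.sphere w0 r, 2 * ε ≤ ‖A + B * Complex.exp (Complex.I * w)‖ := by
  have hBc : (B:ℂ) ≠ 0 := by exact_mod_cast hB
  have hA0 : A ≠ 0 := by rintro rfl; simp at hAB; linarith [abs_nonneg B]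
  have hne : -A / B ≠ 0 := div_ne_zero (neg_ne_zero.2 hA0) hBc
  set w0 := -Complex.I * Complex.log (-A / B) with hw0
  have he : Complex.exp (Complex.I * w0) = -A / B := by
    rw [hw0, ← mul_assoc, mul_neg, Complex.I_mul_I, neg_neg, one_mul, Complex.exp_log hne]
  have him : w0.im < 0 := by
    have : w0.im = - Real.log (‖A‖/|B|) := by
      rw [hw0]; simp [Complex.log_re]
    rw [this]
    have : 1 < ‖A‖ / |B| := by rw [one_lt_div (abs_pos.2 hB)]; exact hAB
    linarith [Real.log_pos this]
  set r := min 1 (-w0.im / 2) with hr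
  have hr0 : 0 < r := lt_min one_pos (by linarith)
  have hr1 : r ≤ 1 := min_le_left _ _
  have hr2 : r ≤ -w0.im / 2 := min_le_right _ _
  have hz : A + B * Complex.exp (Complex.I * w0) = 0 := by rw [he]; field_simp; ring
  obtain ⟨w1, hw1, hmin⟩ := (isCompact_sphere w0 r).exists_isMinOn (NormedSpace.sphere_nonempty.2 hr0.le)
    (f := fun w => ‖A + B * Complex.exp (Complex.I * w)‖) (by fun_prop)
  have hpos : 0 < ‖A + B * Complex.exp (Complex.I * w1)‖ := by
    rw [norm_pos_iff]
    intro h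
    have h2 : Complex.exp (Complex.I * w1) = Complex.exp (Complex.I * w0) := by
      apply mul_left_cancel₀ hBc
      linear_combination h - hz
    obtain ⟨n, hn⟩ := Complex.exp_eq_exp_iff_exists_int.1 h2
    have h3 : w1 - w0 = n * (2 * π) := by
      apply mul_left_cancel₀ Complex.I_ne_zero
      linear_combination hn
    have h4 : ‖w1 - w0‖ = r := by simpa [dist_eq_norm] using hw1
    rw [h3] at h4
    have h5 : |(n:ℝ)| * (2 * π) = r := by
      rw [← h4]; simp [abs_of_pos pi_pos]
    rcases eq_or_ne n 0 with h6 | h6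
    · rw [h6] at h5; simp at h5; linarith
    · have : (1:ℝ) ≤ |(n:ℝ)| := by exact_mod_cast Int.one_le_abs h6
      nlinarith [pi_gt_three]
  refine ⟨w0, r, hr0, ‖A + B * Complex.exp (Complex.I * w1)‖/2, by positivity, hr1, by linarith, hz, fun w hw => ?_⟩
  have := hmin hw
  simp only [Set.mem_ofPred_eq] at this
  linarith

open Filter Topology in
lemma zeros_n {κ η a b : ℝ} (hκ : 0 < κ) (hη : 0 < η) (ha : 0 < a) (hab : a < b) :
    ∃ τ > 0, ∃ L > 0, ∃ f₀ > 0, ∃ w0 : ℂ, ∃ r ≤ 1, ∀ f : ℝ, 0 < f → f < f₀ → ∀ n : ℕ, |f * n - L| < τ →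
      ∃ w q : ℂ, ‖w - w0‖ ≤ r ∧ 0 < q.re ∧ q ^ 3 = 3 / 4 * f * (2 * π * n + w) ∧
       a ≤ (q^2).re ∧ (q^2).re ≤ b ∧ (q^2).im < 0 ∧ Df κ η f (q^2) = 0 := by
  obtain ⟨k, hk1, hk2, hB⟩ := exists_BB hκ hη (Real.sqrt_pos.2 ha) (Real.sqrt_lt_sqrt ha.le hab)
  have hk : 0 < k := (Real.sqrt_pos.2 ha).trans hk1
  have hka : a < k^2 := (Real.sqrt_lt' hk).1 hk1
  have hkb : k^2 < b := (Real.lt_sqrt hk.le).1 hk2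
  have hAB : |BB κ η k| < ‖AA κ η k‖ := by
    apply abs_lt_of_sq_lt_sq _ (norm_nonneg _)
    rw [AABB]; linarith
  obtain ⟨w0, r, hr, ε, hε, hr1, him, hz, hs⟩ := exists_disc hB hAB
  obtain ⟨δ, hδ, hL⟩ := limL_eps (κ := κ) hk hη (Real.exp (‖w0‖ + 1)) ε hε
  have hkc : (k:ℂ) ≠ 0 := by exact_mod_cast hk.ne'
  have hcube : ∀ x : ℂ, (x ^ (1/3:ℂ))^3 = x := by
    intro x
    simp
  -- continuity of the cube root
  have hcont : Tendsto (fun x : ℂ => x ^ (1/3:ℂ)) (𝓝 ((k:ℂ)^3)) (𝓝 (k:ℂ)) := by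
    have hsl : (k:ℂ)^3 ∈ Complex.slitPlane := by
      left; rw [← Complex.ofReal_pow, Complex.ofReal_re]; positivity
    have h := (tendsto_id (α := ℂ) (x := 𝓝 ((k:ℂ)^3))).cpow (tendsto_const_nhds (x := (1/3:ℂ))) hsl
    have e : ((k:ℂ)^3) ^ (1/3:ℂ) = k := by
      rw [← Complex.ofReal_pow, show (1/3:ℂ) = ((1/3:ℝ):ℂ) by push_cast; ring, ← Complex.ofReal_cpow (by positivity)]
      congr 1
      rw [← Real.rpow_natCast, ← Real.rpow_mul hk.le]; norm_num
    simp only [id, e] at h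
    exact h
  have hgood : ∀ᶠ q : ℂ in 𝓝 (k:ℂ), ‖q - k‖ < δ ∧ 0 < q.re ∧ 0 < 3 * q.re^2 - q.im^2 ∧ a < (q^2).re ∧ (q^2).re < b := by
    have c1 : ∀ᶠ q : ℂ in 𝓝 (k:ℂ), ‖q - k‖ < δ := by
      have : Continuous (fun q : ℂ => ‖q - k‖) := by fun_prop
      exact (this.tendsto _).eventually (gt_mem_nhds (by simpa using hδ))
    have c2 : ∀ᶠ q : ℂ in 𝓝 (k:ℂ), 0 < q.re :=
      (Complex.continuous_re.tendsto _).eventually (lt_mem_nhds (by simpa using hk))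
    have c3 : ∀ᶠ q : ℂ in 𝓝 (k:ℂ), 0 < 3 * q.re^2 - q.im^2 := by
      have : Continuous (fun q : ℂ => 3 * q.re^2 - q.im^2) := by fun_prop
      exact (this.tendsto _).eventually (lt_mem_nhds (by simp; positivity))
    have hre : Continuous (fun q : ℂ => (q^2).re) := by fun_prop
    have c4 : ∀ᶠ q : ℂ in 𝓝 (k:ℂ), a < (q^2).re :=
      (hre.tendsto _).eventually (lt_mem_nhds (by rw [← Complex.ofReal_pow, Complex.ofReal_re]; exact hka))
    have c5 : ∀ᶠ q : ℂ in 𝓝 (k:ℂ), (q^2).re < b :=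
      (hre.tendsto _).eventually (gt_mem_nhds (by rw [← Complex.ofReal_pow, Complex.ofReal_re]; exact hkb))
    filter_upwards [c1, c2, c3, c4, c5] with q h1 h2 h3 h4 h5 using ⟨h1, h2, h3, h4, h5⟩
  have hre3 : ∀ᶠ x : ℂ in 𝓝 ((k:ℂ)^3), 0 < x.re :=
    (Complex.continuous_re.tendsto _).eventually (lt_mem_nhds (by rw [← Complex.ofReal_pow, Complex.ofReal_re]; positivity))
  obtain ⟨ρ, hρ, hball⟩ := Metric.eventually_nhds_iff.1 ((hcont.eventually hgood).and hre3)
  refine ⟨ρ / (3 * π), by positivity, k^3 / (3/2 * π), by positivity, min δ (ρ / (2 * (‖w0‖ + 1))), lt_min hδ (by positivity), w0, r, hr1, ?_⟩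
  intro f hf hff n hn
  have hfδ : f < δ := hff.trans_le (min_le_left _ _)
  have hfρ : f * (‖w0‖ + 1) < ρ / 2 := by
    have := hff.trans_le (min_le_right _ _)
    rw [lt_div_iff₀ (by positivity)] at this
    linarith
  have hfc : (f:ℂ) ≠ 0 := by exact_mod_cast hf.ne'
  have hwn : ∀ w ∈ Metric.closedBall w0 r, ‖w‖ ≤ ‖w0‖ + 1 := by
    intro w hw
    have : ‖w - w0‖ ≤ r := by simpa [dist_eq_norm] using hw
    have h2 := norm_sub_norm_le w w0
    linarith
  have hX : ∀ w ∈ Metric.closedBall w0 r, dist (3/4 * f * (2 * π * n + w)) ((k:ℂ)^3) < ρ := by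
    intro w hw
    rw [dist_eq_norm]
    have e : 3/4 * (f:ℂ) * (2 * π * n + w) - (k:ℂ)^3 = ((3/2 * π * (f * n - k^3 / (3/2 * π)) : ℝ) : ℂ) + ((3/4 * f : ℝ):ℂ) * w := by
      have : 3/2 * π * (f * n - k^3 / (3/2 * π)) = 3/2 * π * (f * n) - k^3 := by
        have := pi_pos; field_simp
      rw [this]; push_cast; ring
    rw [e]
    have h1 : 3/2 * π * |f * n - k^3 / (3/2*π)| < ρ / 2 := by
      rw [lt_div_iff₀ (by positivity)] at hn
      linarith
    have h2 := hwn w hw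
    calc _ ≤ ‖((3/2 * π * (f * n - k^3 / (3/2 * π)) : ℝ) : ℂ)‖ + ‖((3/4 * f : ℝ):ℂ) * w‖ := norm_add_le _ _
      _ = 3/2 * π * |f * n - k^3 / (3/2*π)| + 3/4 * f * ‖w‖ := by
        rw [norm_mul, Complex.norm_real, Complex.norm_real, Real.norm_eq_abs, Real.norm_eq_abs, abs_mul, abs_of_pos (show 0 < 3/2 * π by positivity), abs_of_pos (show 0 < 3/4 * f by positivity)]
      _ < ρ / 2 + 3/4 * f * (‖w0‖ + 1) := add_lt_add_of_lt_of_le h1 (by gcongr)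
      _ < _ := by linarith
  set Q : ℂ → ℂ := fun w => (3/4 * f * (2 * π * n + w)) ^ (1/3:ℂ) with hQ
  have hQ3 : ∀ w, Q w ^ 3 = 3/4 * f * (2 * π * n + w) := fun w => hcube _
  have hE : ∀ w, Complex.exp (4 / 3 * Complex.I * Q w ^ 3 / f) = Complex.exp (Complex.I * w) := by
    intro w
    rw [hQ3, Complex.exp_eq_exp_iff_exists_int]
    refine ⟨n, ?_⟩
    field_simp
    push_cast
    ring
  have himw : ∀ w ∈ Metric.closedBall w0 r, w.im < 0 := by
    intro w hw
    have : ‖w - w0‖ ≤ r := by simpa [dist_eq_norm] using hw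
    have h2 := (abs_le.1 (Complex.abs_im_le_norm (w - w0))).2
    simp at h2
    linarith
  have hQim : ∀ w ∈ Metric.closedBall w0 r, (Q w).im < 0 := by
    intro w hw
    have hg := (hball (hX w hw)).1
    have h3 := congrArg Complex.im (hQ3 w)
    have : (3/4 * (f:ℂ) * (2 * π * n + w)).im = 3/4 * f * w.im := by simp
    rw [this] at h3
    have e : (Q w ^ 3).im = (Q w).im * (3 * (Q w).re^2 - (Q w).im^2) := by
      simp [pow_succ]; ring
    rw [e] at h3
    have hp : 0 < 3 * (Q w).re^2 - (Q w).im^2 := hg.2.2.1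
    by_contra hcon
    push Not at hcon
    have h5 := himw w hw
    have h6 : 3/4 * f * w.im < 0 := by nlinarith
    nlinarith
  have hclose : ∀ w ∈ Metric.closedBall w0 r, ‖Df κ η f (Q w ^ 2) - (AA κ η k + BB κ η k * Complex.exp (Complex.I * w))‖ < ε := by
    intro w hw
    have hg := (hball (hX w hw)).1
    have := hL f hf hfδ (Q w) hg.1 (hQim w hw).le (by
      rw [hE, Complex.norm_exp]
      apply Real.exp_le_exp.2
      have := (Complex.re_le_norm (Complex.I * w))
      rw [norm_mul, Complex.norm_I, one_mul] at this
      exact this.trans (hwn w hw))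
    rwa [hE] at this
  have hdiff : DifferentiableOn ℂ (fun w => Df κ η f (Q w ^ 2)) (Metric.closedBall w0 r) := by
    have hQd : DifferentiableOn ℂ Q (Metric.closedBall w0 r) := by
      intro w hw
      have : DifferentiableAt ℂ Q w := by
        refine DifferentiableAt.cpow_const (by fun_prop) ?_
        left; exact (hball (hX w hw)).2
      exact this.differentiableWithinAt
    exact (Df_differentiable κ η f).comp_differentiableOn (hQd.pow 2)
  obtain ⟨w, hw, hzero⟩ := exists_zero_of_min hr hε hdiff (by
      have := hclose w0 (by simp [hr.le]); rwa [hz, sub_zero] at this) (by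
      intro w hw
      have h1 := hclose w (Metric.sphere_subset_closedBall hw)
      have h2 := hs w hw
      have h3 := norm_sub_norm_le (AA κ η k + BB κ η k * Complex.exp (Complex.I * w)) (Df κ η f (Q w ^ 2))
      rw [norm_sub_rev] at h3
      linarith)
  have hg := (hball (hX w hw)).1
  refine ⟨w, Q w, by simpa [dist_eq_norm] using hw, hg.2.1, hQ3 w, hg.2.2.2.1.le, hg.2.2.2.2.le, ?_, hzero⟩
  have h1 : 0 < (Q w).re := hg.2.1
  have h2 := hQim w hw
  rw [sq, Complex.mul_im]
  nlinarith

lemma lower_count {κ η a b : ℝ} (hκ : 0 < κ) (hη : 0 < η) (ha : 0 < a) (hab : a < b) :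
    ∃ c > 0, ∃ f₀ > 0, ∀ f : ℝ, 0 < f → f < f₀ → ∃ S : Finset ℂ,
      (S : Set ℂ) ⊆ {z : ℂ | a ≤ z.re ∧ z.re ≤ b ∧ z.im < 0 ∧ Df κ η f z = 0} ∧ c ≤ f * S.card := by
  obtain ⟨τ, hτ, L, hL, f₀, hf₀, w0, r, hr1, h⟩ := zeros_n hκ hη ha hab
  refine ⟨τ / 2, by positivity, min f₀ (τ/2), lt_min hf₀ (by positivity), fun f hf hff => ?_⟩
  have hf1 := hff.trans_le (min_le_left _ _)
  have hf2 := hff.trans_le (min_le_right _ _)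
  set N := ⌈τ / (2 * f)⌉₊ with hN
  set M := ⌈L / f⌉₊ with hM
  have hM1 : L ≤ f * M := by
    have := Nat.le_ceil (L / f); rw [div_le_iff₀ hf] at this; linarith
  have hM2 : f * M < L + f := by
    have := Nat.ceil_lt_add_one (show 0 ≤ L / f by positivity)
    rw [← hM] at this
    calc f * M < f * (L / f + 1) := by gcongr
      _ = _ := by field_simp
  have hj : ∀ j : Fin N, |f * ((M + j : ℕ) : ℝ) - L| < τ := by
    intro j
    have := Nat.lt_ceil.1 (show (j:ℕ) < ⌈τ / (2 * f)⌉₊ from j.2)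
    rw [lt_div_iff₀ (by positivity)] at this
    have h0 : 0 ≤ f * (j:ℕ) := by positivity
    push_cast
    rw [abs_lt]
    constructor <;> nlinarith
  choose w q h1 h2 h3 h4 h5 h6 h7 using fun j => h f hf hf1 (M + (j : Fin N)) (hj j)
  have hinj : Function.Injective (fun j => q j ^ 2) := by
    intro i j hij
    have hq : q i = q j := eq_of_sq_re hij (h2 i) (h2 j)
    have h8 := (h3 i).symm.trans ((congrArg (· ^ 3) hq).trans (h3 j))
    have hfc : (3/4 * f:ℂ) ≠ 0 := by have : (f:ℂ) ≠ 0 := by exact_mod_cast hf.ne'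
                                     simp [this]
    have h9 := mul_left_cancel₀ hfc h8
    have h10 : ((2 * π * ((i:ℕ) - (j:ℕ) : ℤ) : ℝ) : ℂ) = w j - w i := by
      push_cast at h9 ⊢; linear_combination h9
    have h11 : ‖w j - w i‖ ≤ 2 := by
      have := norm_sub_le (w j - w0) (w i - w0)
      rw [sub_sub_sub_cancel_right] at this
      linarith [h1 i, h1 j]
    rw [← h10, Complex.norm_real, Real.norm_eq_abs, abs_mul, abs_of_pos (by positivity)] at h11
    by_contra hne
    have hne' : ((i:ℕ) - (j:ℕ) : ℤ) ≠ 0 := by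
      intro h0; apply hne; apply Fin.ext; omega
    have : (1:ℝ) ≤ |(((i:ℕ) - (j:ℕ) : ℤ) : ℝ)| := by exact_mod_cast Int.one_le_abs hne'
    nlinarith [pi_gt_three]
  refine ⟨Finset.univ.image (fun j => q j ^ 2), ?_, ?_⟩
  · intro z hz
    simp only [Finset.coe_image, Finset.coe_univ, Set.image_univ, Set.mem_range] at hz
    obtain ⟨j, rfl⟩ := hz
    exact ⟨h4 j, h5 j, h6 j, h7 j⟩
  · rw [Finset.card_image_of_injective _ hinj, Finset.card_univ, Fintype.card_fin]
    have := Nat.le_ceil (τ / (2 * f))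
    rw [← hN, div_le_iff₀ (by positivity)] at this
    linarith


lemma qdata {w : ℂ} {B N : ℝ} (h0 : 0 < w.re) (hB : w.re ≤ B) (hN : w.im = -N) (hN2 : 4 * B ≤ N) (hN1 : 1 ≤ N) :
    ∃ q : ℂ, q ^ 2 = w ∧ 0 < q.re ∧ q.im ≤ 0 ∧ -q.re ≤ q.im ∧ q.re ≤ 2 * (-q.im) ∧ √N ≤ 2 * (-q.im) ∧ √N ≤ ‖q‖ ∧ ‖q‖ ≤ 2 * q.re := by
  have hex : ∃ q : ℂ, q ^ 2 = w ∧ 0 < q.re := by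
    have h := half_sq w
    have him := congrArg Complex.im h
    rw [sq, Complex.mul_im, hN] at him
    rcases lt_trichotomy ((w ^ (1/2:ℂ)).re) 0 with h1 | h1 | h1
    · exact ⟨-(w ^ (1/2:ℂ)), by rw [neg_sq, h], by rw [Complex.neg_re]; linarith⟩
    · rw [h1] at him; linarith
    · exact ⟨_, h, h1⟩
  obtain ⟨q, hq, hx⟩ := hex
  have him := congrArg Complex.im hq
  have hre := congrArg Complex.re hq
  rw [sq, Complex.mul_im, hN] at him
  rw [sq, Complex.mul_re] at hre
  have hn : ‖q‖ ^ 2 = q.re ^ 2 + q.im ^ 2 := by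
    rw [← Complex.normSq_eq_norm_sq, Complex.normSq_apply]; ring
  set x := q.re
  obtain ⟨y, hy⟩ : ∃ y, q.im = -y := ⟨-q.im, by ring⟩
  rw [hy] at him hre hn
  have hy0 : 0 < y := by
    by_contra h
    nlinarith
  have hxy : y ≤ x := by nlinarith
  have hxy2 : x ≤ 2 * y := by
    by_contra h
    nlinarith
  refine ⟨q, hq, hx, by rw [hy]; linarith, by rw [hy]; linarith, by rw [hy]; linarith, ?_, ?_, ?_⟩
  · rw [hy]
    apply Real.sqrt_le_iff.2; constructor
    · linarith
    · nlinarith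
  · apply Real.sqrt_le_iff.2; constructor
    · positivity
    · rw [hn]; nlinarith
  · refine abs_le_of_sq_le_sq' ?_ (by linarith) |>.2
    rw [hn]; nlinarith

lemma norm_E {q : ℂ} {f : ℝ} : ‖Complex.exp (4 / 3 * Complex.I * q ^ 3 / f)‖ = Real.exp (-(4 / 3) * (q ^ 3).im / f) := by
  rw [Complex.norm_exp]
  congr 1
  rw [Complex.div_ofReal_re, show (4 / 3 * Complex.I * q ^ 3 : ℂ) = ((4/3 : ℝ) : ℂ) * (Complex.I * q ^ 3) by push_cast; ring, Complex.re_ofReal_mul, Complex.I_mul_re]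
  ring

lemma E_big {q : ℂ} {f : ℝ} (hf : 0 < f) (hq : 0 < q.re) (h1 : -q.re ≤ q.im) (h2 : q.re ≤ 2 * (-q.im)) :
    q.re ^ 3 ≤ -(q ^ 3).im := by
  have : (q ^ 3).im = 3 * q.re ^ 2 * q.im - q.im ^ 3 := by
    simp [pow_succ]; ring
  rw [this]
  obtain ⟨y, hy⟩ : ∃ y, q.im = -y := ⟨-q.im, by ring⟩
  rw [hy] at h1 h2 ⊢
  set x := q.re
  have : 0 < y := by linarith
  have h3 : y * y ^ 2 ≤ y * x ^ 2 := by gcongr; linarith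
  have h4 : x * x ^ 2 ≤ (2 * y) * x^2 := by gcongr; linarith
  nlinarith

lemma E_ratio {q1 q2 : ℂ} {κ f Y : ℝ} (hκ : 0 < κ) (hf : 0 < f) (hκf : κ * f ≤ 1) (h : q2 ^ 2 - q1 ^ 2 = 2 * κ * f)
    (h1 : 0 < q1.re) (h2 : 0 < q2.re) (hs : 1 ≤ (q1 + q2).re) (hY : (q1 + q2).im ≤ -Y) :
    -(q1 ^ 3).im / f + (q2 ^ 3).im / f ≤ 2 * κ * (1 - 3 / 4 * Y) := by
  set s := q1 + q2 with hsd
  have hs0 : s ≠ 0 := by intro h; rw [h] at hs; simp at hs; linarith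
  have hfc : (f:ℂ) ≠ 0 := by exact_mod_cast hf.ne'
  have e1 : q2 - q1 = 2 * κ * f / s := by
    rw [eq_div_iff hs0, ← h, hsd]; ring
  have e2 : q2 ^ 3 - q1 ^ 3 = ((f * (2 * κ) : ℝ) : ℂ) * (((3/4 : ℝ):ℂ) * s + (((κ * f)^2 : ℝ):ℂ) / s ^ 3) := by
    have : q2 ^ 3 - q1 ^ 3 = (q2 - q1) * (3/4 * s^2 + (q2 - q1)^2/4) := by rw [hsd]; ring
    rw [this, e1]
    push_cast
    field_simp
    ring
  have e3 := congrArg Complex.im e2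
  rw [Complex.im_ofReal_mul, Complex.add_im, Complex.im_ofReal_mul, Complex.sub_im] at e3
  have hns : 1 ≤ ‖s‖ := hs.trans ((le_abs_self _).trans (Complex.abs_re_le_norm s))
  have e4 : ((((κ * f)^2 : ℝ):ℂ) / s ^ 3).im ≤ 1 := by
    refine ((le_abs_self _).trans (Complex.abs_im_le_norm _)).trans ?_
    rw [norm_div, norm_pow, Complex.norm_real, Real.norm_eq_abs, abs_of_nonneg (by positivity)]
    rw [div_le_one (by positivity)]
    calc (κ * f)^2 ≤ 1 := by apply pow_le_one₀ (by positivity) hκf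
      _ ≤ ‖s‖^3 := one_le_pow₀ hns
  rw [← add_div, div_le_iff₀ hf]
  have : 0 < f * (2 * κ) := by positivity
  nlinarith

/-- elementary nonvanishing -/
lemma Dpoly_ne {η ε : ℝ} {S1 P1 T1 S2 P2 : ℂ} (hη : 0 < η) (h0 : 0 ≤ ε) (e1 : ε ≤ 1 / 8) (e2 : ε ≤ η / 8) (e3 : ε * η ≤ 1 / 8)
    (p1 : ‖P1‖ ≤ ε) (p2 : ‖P2‖ ≤ ε) (t1 : ‖T1‖ ≤ ε) (s1 : ‖S1‖ ≤ ε * ‖S2‖) (s2 : 1 ≤ ε * ‖S2‖) : Dpoly η S1 P1 T1 S2 P2 ≠ 0 := by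
  intro h
  have hc := norm_cc
  have ho : ‖ωc‖ = 1 := by rw [om_cc, norm_pow, hc, one_pow]
  have hηc : (η:ℂ) ≠ 0 := by exact_mod_cast hη.ne'
  rw [Dpoly] at h
  have key : ωc * S2 = (η:ℂ) + cc * (P1 + P2) + ωc * (P1 * P2 - S2 * T1) * ((1/η:ℝ):ℂ) - ωc * S1 + (S1 * P2 - S2 * P1) * ((1/η:ℝ):ℂ) := by
    push_cast
    field_simp at h ⊢
    linear_combination -h
  have hS2 : 0 < ‖S2‖ := by
    by_contra hh
    have : ‖S2‖ = 0 := le_antisymm (not_lt.1 hh) (norm_nonneg _)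
    rw [this] at s2; linarith
  have hn := congrArg norm key
  rw [norm_mul, ho, one_mul] at hn
  set i := 1 / η
  have hi : 0 < i := by positivity
  have hie : i * ε ≤ 1 / 8 := by
    rw [show i * ε = ε / η by simp [i]; ring, div_le_iff₀ hη]; linarith
  set σ := ‖S2‖
  have b1 : ‖(η:ℂ)‖ ≤ 1 / 8 * σ := by
    rw [Complex.norm_real, Real.norm_eq_abs, abs_of_pos hη]
    calc η = η * 1 := by ring
      _ ≤ η * (ε * σ) := by gcongr
      _ = (ε * η) * σ := by ring
      _ ≤ _ := by gcongr
  have b2 : ‖cc * (P1 + P2)‖ ≤ 1 / 16 * σ := by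
    rw [norm_mul, hc, one_mul]
    calc _ ≤ ‖P1‖ + ‖P2‖ := norm_add_le _ _
      _ ≤ (ε + ε) * 1 := by linarith
      _ ≤ (1/8 + 1/8) * (1 / 8 * σ) := by
        gcongr
        exact s2.trans (by gcongr)
      _ ≤ _ := by linarith
  have b3 : ‖ωc * (P1 * P2 - S2 * T1) * (i:ℂ)‖ ≤ (1/64 + 1/8) * σ := by
    rw [norm_mul, norm_mul, ho, one_mul, Complex.norm_real, Real.norm_eq_abs, abs_of_pos hi]
    calc _ ≤ (‖P1‖ * ‖P2‖ + σ * ‖T1‖) * i := by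
            gcongr; refine (norm_sub_le _ _).trans ?_; rw [norm_mul, norm_mul]
      _ ≤ (ε * ε * 1 + σ * ε) * i := by rw [mul_one]; gcongr
      _ ≤ (ε * ε * (ε * σ) + σ * ε) * i := by gcongr
      _ = (i * ε) * (ε * ε + 1) * σ := by ring
      _ ≤ (1 / 8) * (1/8 * (1/8) + 1) * σ := by gcongr
      _ ≤ _ := by nlinarith
  have b4 : ‖ωc * S1‖ ≤ 1 / 8 * σ := by
    rw [norm_mul, ho, one_mul]; exact s1.trans (by gcongr)
  have b5 : ‖(S1 * P2 - S2 * P1) * (i:ℂ)‖ ≤ (1/64 + 1/8) * σ := by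
    rw [norm_mul, Complex.norm_real, Real.norm_eq_abs, abs_of_pos hi]
    calc _ ≤ (‖S1‖ * ‖P2‖ + σ * ‖P1‖) * i := by
            gcongr; refine (norm_sub_le _ _).trans ?_; rw [norm_mul, norm_mul]
      _ ≤ ((ε * σ) * ε + σ * ε) * i := by gcongr
      _ = (i * ε) * (ε + 1) * σ := by ring
      _ ≤ (1 / 8) * (1/8 + 1) * σ := by gcongr
      _ ≤ _ := by linarith
  have := norm_add_le ((η:ℂ) + cc * (P1 + P2) + ωc * (P1 * P2 - S2 * T1) * (i:ℂ) - ωc * S1) ((S1 * P2 - S2 * P1) * (i:ℂ))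
  have := norm_sub_le ((η:ℂ) + cc * (P1 + P2) + ωc * (P1 * P2 - S2 * T1) * (i:ℂ)) (ωc * S1)
  have := norm_add_le ((η:ℂ) + cc * (P1 + P2)) (ωc * (P1 * P2 - S2 * T1) * (i:ℂ))
  have := norm_add_le (η:ℂ) (cc * (P1 + P2))
  linarith


lemma one_add_bd {a : ℂ} (h : ‖a‖ ≤ 1 / 2) : ‖1 + a‖ ≤ 3 / 2 ∧ 1 / 2 ≤ ‖1 + a‖ := by
  constructor
  · have := norm_add_le 1 a
    rw [norm_one] at this; linarith
  · have := norm_sub_le (1 + a) a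
    rw [add_sub_cancel_right, norm_one] at this; linarith

lemma six_sqrt {f : ℝ} {q : ℂ} (hf : 0 < f) (hf1 : f ≤ 1 / 144) (hq : 1 ≤ ‖q‖) : 6 * √(f / ‖q‖ ^ 3) ≤ 1 / 2 := by
  have : √(f / ‖q‖ ^ 3) ≤ 1 / 12 := by
    apply Real.sqrt_le_iff.2 ⟨by norm_num, ?_⟩
    calc f / ‖q‖ ^ 3 ≤ f := div_le_self hf.le (one_le_pow₀ hq)
      _ ≤ _ := by linarith
  linarith

lemma sq_bd {q : ℂ} {f N : ℝ} (hf : 0 < f) (hf1 : f ≤ 1 / 144) (hN : 1 ≤ N)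
   (h1 : 0 < q.re) (h2 : q.im ≤ 0) (h3 : -q.re ≤ q.im) (h4 : q.re ≤ 2 * (-q.im)) (h6 : √N ≤ ‖q‖) (h7 : ‖q‖ ≤ 2 * q.re) :
   ‖PP f (q^2)‖ ≤ 2 / √N ∧ ‖TT f (q^2)‖ ≤ 2 / √N ∧ 
   ‖SS f (q^2)‖ ≤ 2 / ‖q‖ * Real.exp (-(4 / 3) * (q ^ 3).im / f) ∧ 
   1 / (8 * ‖q‖) * Real.exp (-(4 / 3) * (q ^ 3).im / f) ≤ ‖SS f (q^2)‖ ∧ 1 ≤ 48 / N * ‖SS f (q^2)‖ := by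
  have hsN : 1 ≤ √N := by rw [Real.one_le_sqrt]; exact hN
  have hq1 : 1 ≤ ‖q‖ := hsN.trans h6
  have hq0 : 0 < ‖q‖ := by linarith
  obtain ⟨a, b, ha, hb, hS, hP, hT⟩ := uv_asym hf h1 h2 h3
  have ha2 := one_add_bd (ha.trans (six_sqrt hf hf1 hq1))
  have hb2 := one_add_bd (hb.trans (six_sqrt hf hf1 hq1))
  have hE := E_big hf h1 h3 h4
  have hE3 : 1 + 4 / 3 * q.re ^ 3 ≤ Real.exp (-(4 / 3) * (q ^ 3).im / f) := by
    refine le_trans ?_ (Real.add_one_le_exp _)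
    have : 4 / 3 * q.re ^ 3 ≤ -(4 / 3) * (q ^ 3).im / f := by
      rw [le_div_iff₀ hf]
      have : 0 < 4 / 3 * q.re ^ 3 := by positivity
      nlinarith
    linarith
  have hx3 : 0 < q.re ^ 3 := by positivity
  have n1 : ‖(c6 / (2 * q))‖ = 1 / (2 * ‖q‖) := by rw [norm_div, norm_c6, norm_mul]; simp
  have n2 : ‖(1 / (2 * q))‖ = 1 / (2 * ‖q‖) := by rw [norm_div, norm_one, norm_mul]; simp
  have n3 : ‖(cc / (2 * q))‖ = 1 / (2 * ‖q‖) := by rw [norm_div, norm_cc, norm_mul]; simp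
  have hSn : ‖SS f (q^2)‖ = 1 / (2 * ‖q‖) * Real.exp (-(4 / 3) * (q ^ 3).im / f) * ‖1 + a‖ ^ 2 := by
    rw [hS, norm_mul, norm_mul, n3, norm_E, norm_pow]
  have hlow : 1 / (8 * ‖q‖) * Real.exp (-(4 / 3) * (q ^ 3).im / f) ≤ ‖SS f (q^2)‖ := by
    rw [hSn]
    calc _ = 1 / (2 * ‖q‖) * Real.exp (-(4 / 3) * (q ^ 3).im / f) * (1/2) ^ 2 := by ring
      _ ≤ _ := by gcongr; exact ha2.2
  refine ⟨?_, ?_, ?_, hlow, ?_⟩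
  · rw [hP, norm_mul, n1, norm_mul]
    calc 1 / (2 * ‖q‖) * (‖1 + a‖ * ‖1 + b‖) ≤ 1 / (2 * √N) * (3/2 * (3/2)) := by
          gcongr; exact ha2.1; exact hb2.1
      _ = (9/8) / √N := by ring
      _ ≤ _ := by gcongr; norm_num
  · rw [hT, norm_mul, norm_mul, n2, Complex.exp_neg, norm_inv, norm_E, norm_pow]
    calc 1 / (2 * ‖q‖) * (Real.exp (-(4 / 3) * (q ^ 3).im / f))⁻¹ * ‖1 + b‖ ^ 2 ≤ 1 / (2 * √N) * 1 * (3/2)^2 := by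
          gcongr
          · apply inv_le_one_of_one_le₀; linarith
          · exact hb2.1
      _ = (9/8) / √N := by ring
      _ ≤ _ := by gcongr; norm_num
  · rw [hSn]
    calc _ ≤ 1 / (2 * ‖q‖) * Real.exp (-(4 / 3) * (q ^ 3).im / f) * (3/2) ^ 2 := by
          gcongr; exact ha2.1
      _ = (9/8) * (1 / ‖q‖ * Real.exp (-(4 / 3) * (q ^ 3).im / f)) := by ring
      _ ≤ 2 * (1 / ‖q‖ * Real.exp (-(4 / 3) * (q ^ 3).im / f)) := by gcongr; norm_num
      _ = _ := by ring
  · have : N / 48 ≤ ‖SS f (q^2)‖ := by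
      refine le_trans ?_ hlow
      calc N / 48 ≤ 1 / (8 * (2 * q.re)) * (4 / 3 * q.re ^ 3) := by
            rw [show 1 / (8 * (2 * q.re)) * (4 / 3 * q.re ^ 3) = q.re ^ 2 / 12 by field_simp; norm_num]
            have : N ≤ (2 * q.re) ^ 2 := by
              rw [← Real.sqrt_le_left (by linarith)]; exact h6.trans h7
            linarith
        _ ≤ _ := by gcongr; linarith
    rw [div_mul_eq_mul_div, le_div_iff₀ (by linarith)]; linarith

lemma deep {κ η a b f N ε : ℝ} {z : ℂ} (hκ : 0 < κ) (hη : 0 < η) (hf : 0 < f) (hf1 : f ≤ 1 / 144) (hκf : κ * f ≤ 1)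
    (hκa : κ * f < a) (hza : a ≤ z.re) (hzb : z.re ≤ b) (hz : z.im = -N) (hN : 4 * (b + 1) ≤ N) (hN1 : 1 ≤ N) (hN2 : κ ≤ N)
    (e1 : ε ≤ 1 / 8) (e2 : ε ≤ η / 8) (e3 : ε * η ≤ 1 / 8) (e4 : 2 / √N ≤ ε) (e5 : 48 / N ≤ ε)
    (e6 : 32 * Real.exp (8 * κ / 3 - 2 * κ * √N) ≤ ε) : Df κ η f z ≠ 0 := by
  have hsN : 1 ≤ √N := by rw [Real.one_le_sqrt]; exact hN1
  have hkf0 : 0 < κ * f := by positivity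
  obtain ⟨q1, hq1, a1, a2, a3, a4, a5, a6, a7⟩ := qdata (w := z - κ * f) (B := b + 1) (N := N) (by simp; linarith) (by simp; linarith) (by simp [hz]) hN hN1
  obtain ⟨q2, hq2, b1, b2, b3, b4, b5, b6, b7⟩ := qdata (w := z + κ * f) (B := b + 1) (N := N) (by simp; linarith) (by simp; linarith) (by simp [hz]) hN hN1
  rw [Df_eq, ← hq1, ← hq2]
  obtain ⟨r1, r2, r3, r4, r5⟩ := sq_bd hf hf1 hN1 a1 a2 a3 a4 a6 a7
  obtain ⟨s1, s2, s3, s4, s5⟩ := sq_bd hf hf1 hN1 b1 b2 b3 b4 b6 b7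
  have h0 : 0 ≤ ε := le_trans (by positivity) e4
  have hn1 : 0 < ‖q1‖ := by linarith
  have hn2 : 0 < ‖q2‖ := by linarith
  refine Dpoly_ne hη h0 e1 e2 e3 (r1.trans e4) (s1.trans e4) (r2.trans e4) ?_ (s5.trans (by gcongr))
  have hd : q2 ^ 2 - q1 ^ 2 = 2 * κ * f := by rw [hq1, hq2]; ring
  have hr := E_ratio (Y := √N) hκ hf hκf hd a1 b1 (by rw [Complex.add_re]; linarith) (by rw [Complex.add_im]; linarith)
  have hqq : ‖q2‖ ≤ 2 * ‖q1‖ := by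
    refine (abs_le_of_sq_le_sq' ?_ (by linarith)).2
    have : ‖q2‖ ^ 2 ≤ ‖q1‖^2 + 2 := by
      rw [← norm_pow, ← norm_pow, show q2 ^ 2 = q1 ^ 2 + ((2 * (κ * f) : ℝ) : ℂ) by push_cast; linear_combination hd]
      refine (norm_add_le _ _).trans ?_
      rw [Complex.norm_real, Real.norm_eq_abs, abs_of_pos (by positivity)]; linarith
    nlinarith
  calc ‖SS f (q1^2)‖ ≤ 2 / ‖q1‖ * Real.exp (-(4 / 3) * (q1 ^ 3).im / f) := r3
    _ ≤ 2 / (‖q2‖ / 2) * (Real.exp (8 * κ / 3 - 2 * κ * √N) * Real.exp (-(4 / 3) * (q2 ^ 3).im / f)) := by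
        gcongr
        · linarith
        · rw [← Real.exp_add]
          apply Real.exp_le_exp.2
          have : -(4 / 3) * (q1 ^ 3).im / f = 4 / 3 * (-(q1 ^ 3).im / f + (q2 ^ 3).im / f) + -(4 / 3) * (q2 ^ 3).im / f := by ring
          rw [this]
          linarith
    _ = (32 * Real.exp (8 * κ / 3 - 2 * κ * √N)) * (1 / (8 * ‖q2‖) * Real.exp (-(4 / 3) * (q2 ^ 3).im / f)) := by
        field_simp; norm_num
    _ ≤ ε * ‖SS f (q2^2)‖ := by gcongr

open Filter Topology in
lemma deep_free {κ η a b : ℝ} (hκ : 0 < κ) (hη : 0 < η) (ha : 0 < a) :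
    ∃ M : ℝ, ∃ f₀ > 0, ∀ f, 0 < f → f < f₀ → ∀ z : ℂ, a ≤ z.re → z.re ≤ b → Df κ η f z = 0 → -M < z.im := by
  set ε := min (1/8) (min (η/8) (1 / (8 * η)))
  have hε : 0 < ε := by positivity
  have t0 : Tendsto (fun N : ℝ => √N) atTop atTop := Real.tendsto_sqrt_atTop
  have t1 : Tendsto (fun N : ℝ => 2 / √N) atTop (𝓝 0) := t0.const_div_atTop 2
  have t2 : Tendsto (fun N : ℝ => 48 / N) atTop (𝓝 0) := tendsto_id.const_div_atTop 48
  have t3 : Tendsto (fun N : ℝ => 32 * Real.exp (8 * κ / 3 - 2 * κ * √N)) atTop (𝓝 0) := by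
    have : Tendsto (fun N : ℝ => 8 * κ / 3 - 2 * κ * √N) atTop atBot := by
      have h : Tendsto (fun N : ℝ => 8 * κ / 3 + -(2 * κ * √N)) atTop atBot :=
        tendsto_atBot_add_const_left _ _ (tendsto_neg_atTop_atBot.comp (t0.const_mul_atTop (by positivity)))
      simpa [sub_eq_add_neg] using h
    simpa using (Real.tendsto_exp_atBot.comp this).const_mul 32
  have ev := (t1.eventually (ge_mem_nhds hε)).and ((t2.eventually (ge_mem_nhds hε)).and ((t3.eventually (ge_mem_nhds hε)).and
    ((eventually_ge_atTop (4 * (b + 1))).and ((eventually_ge_atTop 1).and (eventually_ge_atTop κ)))))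
  obtain ⟨M, hM⟩ := eventually_atTop.1 ev
  refine ⟨M, min (1/144) (min (1/κ) (a/κ)), by positivity, fun f hf hf1 z hza hzb hz0 => ?_⟩
  by_contra hh
  push Not at hh
  obtain ⟨m1, m2, m3, m4, m5, m6⟩ := hM (-z.im) (by linarith)
  have g1 : f < 1/144 := hf1.trans_le (min_le_left _ _)
  have g2 : f < 1/κ := hf1.trans_le ((min_le_right _ _).trans (min_le_left _ _))
  have g3 : f < a/κ := hf1.trans_le ((min_le_right _ _).trans (min_le_right _ _))
  rw [lt_div_iff₀ hκ] at g2 g3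
  have k3 : ε ≤ 1 / (8 * η) := (min_le_right _ _).trans (min_le_right _ _)
  rw [le_div_iff₀ (by positivity)] at k3
  exact deep hκ hη hf g1.le (by linarith) (by linarith) hza hzb (by ring) m4 m5 m6 (min_le_left _ _)
    ((min_le_right _ _).trans (min_le_left _ _)) (by linarith) m1 m2 m3 hz0


lemma cube_bd {s r : ℝ} (hs : 0 ≤ s) (hr : 0 ≤ r) : s ^ 2 * r ≤ r ^ 3 / 6 + 3 * s ^ 3 := by
  by_cases h : r ≤ 3 * s
  · have : s ^ 2 * r ≤ s ^ 2 * (3 * s) := by gcongr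
    have : 0 ≤ r ^ 3 := by positivity
    nlinarith
  · push Not at h
    have : s ^ 2 ≤ r ^ 2 / 6 := by nlinarith
    have : s ^ 2 * r ≤ r ^ 2 / 6 * r := by gcongr
    have : 0 ≤ s ^ 3 := by positivity
    nlinarith

lemma HH_growth : ∃ C : ℝ, 0 ≤ C ∧ ∀ w : ℂ, ‖HH w‖ ≤ C * Real.exp (3 * √‖w‖ ^ 3) := by
  refine ⟨∫ r in Set.Ioi (0:ℝ), Real.exp (-(r ^ 3 / 6)), MeasureTheory.integral_nonneg fun r => by positivity, fun w => ?_⟩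
  have hi : MeasureTheory.IntegrableOn (fun r : ℝ => Real.exp (-(r ^ 3 / 6))) (Set.Ioi 0) := by
    have := intble_cube 0 (b := 1/6) (by norm_num)
    refine this.congr_fun (fun r hr => ?_) measurableSet_Ioi
    simp; ring
  rw [HH, ← MeasureTheory.integral_mul_const]
  refine MeasureTheory.norm_integral_le_of_norm_le (hi.mul_const _) ?_
  refine MeasureTheory.ae_restrict_of_forall_mem measurableSet_Ioi (fun r hr => ?_)
  have hr0 : 0 < r := hr
  rw [Complex.norm_exp, ← Real.exp_add]
  apply Real.exp_le_exp.2
  have h1 := cube_bd (Real.sqrt_nonneg ‖w‖) hr0.le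
  rw [Real.sq_sqrt (norm_nonneg _)] at h1
  have h2 : -(w * r).re ≤ ‖w‖ * r := by
    have := (neg_le_abs _).trans (Complex.abs_re_le_norm (w * r))
    rwa [norm_mul, Complex.norm_real, Real.norm_eq_abs, abs_of_pos hr0] at this
  have h3 : (-(r:ℂ) ^ 3 / 3 - w * r).re = - (r^3/3) - (w * r).re := by
    rw [Complex.sub_re, show (-(r:ℂ) ^ 3 / 3) = ((-(r^3/3) : ℝ) : ℂ) by push_cast; ring, Complex.ofReal_re]
  rw [h3]
  linarith

lemma Ai_growth : ∃ C : ℝ, 0 ≤ C ∧ ∀ w : ℂ, ‖Ai w‖ ≤ C * Real.exp (3 * √‖w‖ ^ 3) := by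
  obtain ⟨C, hC, h⟩ := HH_growth
  refine ⟨‖1 / (2 * π * Complex.I)‖ * (C + C), by positivity, fun w => ?_⟩
  rw [Ai_eq, norm_mul, mul_assoc ‖(1 / (2 * π * Complex.I) : ℂ)‖]
  refine mul_le_mul_of_nonneg_left ?_ (norm_nonneg _)
  refine (norm_sub_le _ _).trans ?_
  have h1 := h (cc * w)
  have h2 := h (cb * w)
  rw [norm_mul, norm_cc, one_mul] at h1
  rw [norm_mul, norm_cb, one_mul] at h2
  rw [norm_mul, norm_mul, norm_cc, norm_cb]
  linarith

lemma scale32 {f R : ℝ} (hf : 0 < f) (hR : 0 ≤ R) {x : ℝ} (hx : x ≤ R) :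
    √(x * f ^ (-(2 : ℝ) / 3)) ^ 3 ≤ √R ^ 3 / f := by
  have h1 : √(f ^ (-(2 : ℝ) / 3)) ^ 3 = 1 / f := by
    rw [Real.sqrt_eq_rpow, ← Real.rpow_mul hf.le, ← Real.rpow_natCast, ← Real.rpow_mul hf.le]
    norm_num
    rw [Real.rpow_neg_one]
  calc √(x * f ^ (-(2 : ℝ) / 3)) ^ 3 ≤ √(R * f ^ (-(2 : ℝ) / 3)) ^ 3 := by gcongr
    _ = _ := by rw [Real.sqrt_mul hR, mul_pow, h1]; ring

lemma Df_growth {κ η R : ℝ} (hκ : 0 < κ) (hη : 0 < η) (hR : 0 ≤ R) : ∃ C K : ℝ, 1 ≤ C ∧ 0 ≤ K ∧ ∀ f, 0 < f → f ≤ 1 →  ∀ z : ℂ, ‖z‖ ≤ R →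
    ‖Df κ η f z‖ ≤ C * Real.exp (K / f) := by
  obtain ⟨C0, hC0, hAi⟩ := Ai_growth
  set L := √(R + κ) ^ 3
  have hL : 0 ≤ L := by positivity
  set C1 := C0 ^ 2 * (2 * π) / η
  have hC1 : 0 ≤ C1 := by positivity
  refine ⟨1 + 2 * C1 + 2 * C1 ^ 2, 12 * L + 2, by nlinarith, by positivity, fun f hf hf1 z hz => ?_⟩
  have hfp : (0:ℝ) < f ^ (-(2 : ℝ) / 3) := by positivity
  have hw : ∀ x : ℂ, ‖x‖ ≤ R + κ → ∀ c : ℂ, ‖c‖ = 1 → ‖Ai (c * x * ((f ^ (-(2 : ℝ) / 3) : ℝ) : ℂ))‖ ≤ C0 * Real.exp (3 * L / f) := by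
    intro x hx c hc
    refine (hAi _).trans ?_
    rw [norm_mul, norm_mul, hc, one_mul, Complex.norm_real, Real.norm_eq_abs, abs_of_pos hfp, mul_div_assoc]
    gcongr
    exact scale32 hf (by linarith) hx
  have ho : ‖-ωc‖ = 1 := by rw [norm_neg, om_cc, norm_pow, norm_cc, one_pow]
  have hm : ‖(-1:ℂ)‖ = 1 := by simp
  have hkf : ‖((κ * f : ℝ):ℂ)‖ ≤ κ := by
    rw [Complex.norm_real, Real.norm_eq_abs, abs_of_pos (by positivity)]; nlinarith
  have x1 : ‖z - κ * f‖ ≤ R + κ := by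
    refine (norm_sub_le _ _).trans ?_
    rw [← Complex.ofReal_mul]; linarith
  have x2 : ‖z + κ * f‖ ≤ R + κ := by
    refine (norm_add_le _ _).trans ?_
    rw [← Complex.ofReal_mul]; linarith
  have a1 := hw _ x1 _ ho
  have a2 := hw _ x2 _ ho
  have a3 := hw _ x1 _ hm
  have a4 := hw _ x2 _ hm
  rw [neg_one_mul] at a3 a4
  have pr : ∀ x y : ℂ, ‖x‖ ≤ C0 * Real.exp (3 * L / f) → ‖y‖ ≤ C0 * Real.exp (3 * L / f) → ‖x * y‖ ≤ C0 ^ 2 * Real.exp (6 * L / f) := by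
    intro x y hx hy
    rw [norm_mul]
    calc _ ≤ (C0 * Real.exp (3 * L / f)) * (C0 * Real.exp (3 * L / f)) := by gcongr
      _ = C0 ^ 2 * (Real.exp (3 * L / f) * Real.exp (3 * L / f)) := by ring
      _ = _ := by rw [← Real.exp_add]; congr 2; ring
  have b1 : ‖alphaP κ f z‖ ≤ C0 ^ 2 * Real.exp (6 * L / f) := pr _ _ a1 a3
  have b2 : ‖alphaM κ f z‖ ≤ C0 ^ 2 * Real.exp (6 * L / f) := pr _ _ a2 a4
  have b3 : ‖betaP κ f z‖ ≤ C0 ^ 2 * Real.exp (6 * L / f) := pr _ _ a2 a3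
  have b4 : ‖betaM κ f z‖ ≤ C0 ^ 2 * Real.exp (6 * L / f) := pr _ _ a1 a4
  have hW : ‖Wf f‖⁻¹ ≤ 2 * π * Real.exp (1 / f) := by
    rw [Wf_eq, norm_div, norm_mul, norm_d6, mul_one, Complex.norm_real, Real.norm_eq_abs, abs_of_pos (by positivity), inv_div]
    have : ‖(2 * π : ℂ)‖ = 2 * π := by
      rw [norm_mul, Complex.norm_real, Real.norm_eq_abs, abs_of_pos Real.pi_pos]; simp
    rw [this, div_eq_mul_inv]
    gcongr
    calc (f ^ ((1:ℝ)/3))⁻¹ ≤ (f ^ (1:ℝ))⁻¹ := by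
          exact inv_anti₀ (by positivity) (Real.rpow_le_rpow_of_exponent_ge hf hf1 (by norm_num))
      _ = 1 / f := by simp
      _ ≤ _ := by have := Real.add_one_le_exp (1 / f); linarith
  set X := Real.exp ((6 * L + 1) / f)
  have hX : 1 ≤ X := Real.one_le_exp (by positivity)
  have hXX : Real.exp ((12 * L + 2) / f) = X ^ 2 := by
    rw [← Real.exp_nat_mul]; congr 1; push_cast; ring
  have hX1 : C0 ^ 2 * Real.exp (6 * L / f) * (2 * π * Real.exp (1 / f)) / η = C1 * X := by
    simp only [X, C1]
    rw [show (6 * L + 1) / f = 6 * L / f + 1 / f by ring, Real.exp_add]; ring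
  have q : ∀ x : ℂ, ‖x‖ ≤ C0 ^ 2 * Real.exp (6 * L / f) → ‖x / (η * Wf f)‖ ≤ C1 * X := by
    intro x hx
    rw [norm_div, norm_mul, Complex.norm_real, Real.norm_eq_abs, abs_of_pos hη, ← hX1]
    calc ‖x‖ / (η * ‖Wf f‖) = ‖x‖ * ‖Wf f‖⁻¹ / η := by rw [div_mul_eq_div_div_swap, div_eq_mul_inv ‖x‖]
      _ ≤ _ := by gcongr
  have e : Df κ η f z = 1 + (alphaP κ f z / (η * Wf f) + alphaM κ f z / (η * Wf f)) + 
     betaP κ f z / (η * Wf f) * (betaM κ f z / (η * Wf f) - betaP κ f z / (η * Wf f)) := by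
    rw [Df]; ring
  rw [e, hXX]
  have d1 := q _ b1
  have d2 := q _ b2
  have d3 := q _ b3
  have d4 := q _ b4
  calc _ ≤ ‖(1:ℂ)‖ + (C1 * X + C1 * X) + (C1 * X) * (C1 * X + C1 * X) := by
        refine norm_add_le_of_le (norm_add_le_of_le le_rfl (norm_add_le_of_le d1 d2)) ?_
        rw [norm_mul]
        gcongr
        exact norm_sub_le_of_le d4 d3
    _ = 1 + 2 * C1 * X + 2 * C1 ^ 2 * X ^ 2 := by rw [norm_one]; ring
    _ ≤ X ^ 2 + 2 * C1 * X ^ 2 + 2 * C1 ^ 2 * X ^ 2 := by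
        gcongr
        · exact one_le_pow₀ hX
        · nlinarith
    _ = _ := by ring


lemma vo_eq {g : ℂ → ℂ} (hg : Differentiable ℂ g) {c : ℂ} (hc : g c ≠ 0) (z : ℂ) :
    analyticOrderAt g z = (vanishingOrder g z : ℕ∞) := by
  have han : AnalyticOnNhd ℂ g Set.univ := fun x _ => hg.analyticAt x
  have hne : analyticOrderAt g z ≠ ⊤ := by
    intro h
    rw [analyticOrderAt_eq_top] at h
    exact hc (han.eqOn_zero_of_preconnected_of_eventuallyEq_zero isPreconnected_univ (Set.mem_univ z) h (Set.mem_univ c))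
  obtain ⟨n, hn⟩ := ENat.ne_top_iff_exists.1 hne
  rw [← hn]
  have h := (analyticOrderAt_eq_nat_iff_iteratedDeriv_eq_zero (hg.analyticAt z)).1 hn.symm
  congr 1
  rw [vanishingOrder]
  symm
  apply le_antisymm
  · exact Nat.sInf_le h.2
  · apply le_csInf ⟨n, h.2⟩
    intro m hm
    by_contra hlt
    exact hm (h.1 m (by omega))

lemma vo_pos {g : ℂ → ℂ} (hg : Differentiable ℂ g) {c : ℂ} (hc : g c ≠ 0) {z : ℂ} (hz : g z = 0) : 1 ≤ vanishingOrder g z := by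
  have h := vo_eq hg hc z
  by_contra hh
  have : vanishingOrder g z = 0 := by omega
  rw [this] at h
  rw [Nat.cast_zero, (hg.analyticAt z).analyticOrderAt_eq_zero] at h
  exact h hz

lemma count_bd {g : ℂ → ℂ} (hg : Differentiable ℂ g) {c : ℂ} (hc : g c ≠ 0) {r M : ℝ} (hr : 0 < r) (hM : 1 ≤ M)
    (hb : ∀ z ∈ Metric.sphere c (2 * r), ‖g z‖ ≤ M) (Z : Set ℂ) (hZ : Z ⊆ Metric.closedBall c r) (hZ0 : ∀ z ∈ Z, g z = 0) :
    Z.Finite ∧ ((∑ᶠ z ∈ Z, vanishingOrder g z : ℕ) : ℝ) ≤ Real.log (M / ‖g c‖) / Real.log 2 := by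
  have han : ∀ s, AnalyticOnNhd ℂ g s := fun s x _ => hg.analyticAt x
  have habs : |r| = r := abs_of_pos hr
  have habs2 : |2 * r| = 2 * r := abs_of_pos (by linarith)
  have J := AnalyticOnNhd.sum_divisor_le (c := c) (r := r) (R := 2 * r) (M := M) (f := g) (by rw [habs]; exact hr)
    (by rw [habs, habs2]; linarith) hM (han _) hc (by rwa [habs2])
  rw [habs, show 2 * r / r = 2 by field_simp] at J
  set D := MeromorphicOn.divisor g (Metric.closedBall c r)
  have hfin : (Function.support D).Finite := D.finiteSupport (isCompact_closedBall ..)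
  have hD : ∀ z ∈ Metric.closedBall c r, D z = (vanishingOrder g z : ℤ) := by
    intro z hz
    rw [MeromorphicOn.AnalyticOnNhd.divisor_apply (han _) hz, vo_eq hg hc z]
    rfl
  have hsub : Z ⊆ Function.support D := by
    intro z hz
    rw [Function.mem_support, hD z (hZ hz)]
    have := vo_pos hg hc (hZ0 z hz)
    omega
  have hZf := hfin.subset hsub
  refine ⟨hZf, le_trans ?_ J⟩
  rw [finsum_mem_eq_finite_toFinset_sum _ hZf]
  rw [finsum_eq_sum _ hfin]
  have hnn : 0 ≤ D := MeromorphicOn.AnalyticOnNhd.divisor_nonneg (han _)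
  have : ((∑ z ∈ hZf.toFinset, vanishingOrder g z : ℕ) : ℤ) ≤ ∑ u ∈ hfin.toFinset, D u := by
    push_cast
    calc ∑ z ∈ hZf.toFinset, (vanishingOrder g z : ℤ) = ∑ z ∈ hZf.toFinset, D z := by
          apply Finset.sum_congr rfl
          intro z hz
          rw [hD z (hZ (by simpa using hz))]
      _ ≤ _ := by
        apply Finset.sum_le_sum_of_subset_of_nonneg
        · intro z hz
          simp only [Set.Finite.mem_toFinset] at hz ⊢
          exact hsub hz
        · intro z _ _; exact hnn z
  exact_mod_cast this

lemma center {κ η k : ℝ} (hk : 0 < k) (hη : 0 < η) : ∃ m > 0, ∃ δ > 0, ∀ f, 0 < f → f < δ → m ≤ ‖Df κ η f ((k:ℂ) ^ 2)‖ := by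
  have hAB : |BB κ η k| < ‖AA κ η k‖ := by
    apply abs_lt_of_sq_lt_sq _ (norm_nonneg _)
    rw [AABB]; linarith
  set e := (‖AA κ η k‖ - |BB κ η k|) / 2 with he
  have he0 : 0 < e := by linarith
  obtain ⟨δ, hδ, h⟩ := limL_eps (κ := κ) hk hη 1 e he0
  refine ⟨e, he0, δ, hδ, fun f hf hfδ => ?_⟩
  have hE : ‖Complex.exp (4 / 3 * Complex.I * (k:ℂ) ^ 3 / f)‖ = 1 := by
    rw [norm_E, ← Complex.ofReal_pow, Complex.ofReal_im]; simp
  have := h f hf hfδ k (by simpa using hδ) (by simp) hE.le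
  set E := Complex.exp (4 / 3 * Complex.I * (k:ℂ) ^ 3 / f)
  have h1 : ‖(BB κ η k : ℂ) * E‖ = |BB κ η k| := by
    rw [norm_mul, hE, mul_one, Complex.norm_real, Real.norm_eq_abs]
  have h2 := norm_sub_norm_le (AA κ η k) (-(BB κ η k * E))
  rw [norm_neg, h1, sub_neg_eq_add] at h2
  have h3 := norm_sub_norm_le (AA κ η k + BB κ η k * E) (Df κ η f ((k:ℂ) ^ 2))
  rw [norm_sub_rev] at h3
  linarith

lemma upper_count {κ η a b : ℝ} (hκ : 0 < κ) (hη : 0 < η) (ha : 0 < a) (hab : a < b) :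
    ∃ C : ℝ, ∃ f₀ > 0, ∀ f, 0 < f → f < f₀ → (∃ c, Df κ η f c ≠ 0) ∧
      {z : ℂ | a ≤ z.re ∧ z.re ≤ b ∧ z.im < 0 ∧ Df κ η f z = 0}.Finite ∧ f * (Jcount κ η f a b : ℝ) ≤ C := by
  obtain ⟨M, f1, hf1, hdeep⟩ := deep_free (b := b) hκ hη ha
  have hk : 0 < √a := Real.sqrt_pos.2 ha
  obtain ⟨m, hm, δ, hδ, hcen⟩ := center (κ := κ) hk hη
  have hka : ((√a : ℝ) : ℂ) ^ 2 = a := by rw [← Complex.ofReal_pow, Real.sq_sqrt ha.le]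
  rw [hka] at hcen
  set r := b + |M| + 1
  have hr : 0 < r := by have := abs_nonneg M; simp only [r]; linarith
  obtain ⟨C, K, hC, hK, hgr⟩ := Df_growth (R := a + 2 * r) hκ hη (by linarith)
  refine ⟨(|Real.log (C / m)| + K) / Real.log 2, min f1 (min δ 1), by positivity, fun f hf hff => ?_⟩
  have g1 : f < f1 := hff.trans_le (min_le_left _ _)
  have g2 : f < δ := hff.trans_le ((min_le_right _ _).trans (min_le_left _ _))
  have g3 : f < 1 := hff.trans_le ((min_le_right _ _).trans (min_le_right _ _))
  have hcf := hcen f hf g2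
  have hc0 : Df κ η f a ≠ 0 := by
    intro h; rw [h, norm_zero] at hcf; linarith
  have hMM : 1 ≤ C * Real.exp (K / f) := by
    have := Real.one_le_exp (x := K / f) (by positivity)
    nlinarith
  have key := count_bd (Df_differentiable κ η f) hc0 hr hMM (by
    intro z hz
    apply hgr f hf g3.le
    have h1 : ‖z - a‖ = 2 * r := by simpa [dist_eq_norm] using hz
    have h2 := norm_le_norm_add_norm_sub' z a
    rw [h1, Complex.norm_real, Real.norm_eq_abs, abs_of_pos ha] at h2
    exact h2) {z : ℂ | a ≤ z.re ∧ z.re ≤ b ∧ z.im < 0 ∧ Df κ η f z = 0} (by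
    rintro z ⟨z1, z2, z3, z4⟩
    have z5 := hdeep f hf g1 z z1 z2 z4
    rw [Metric.mem_closedBall, dist_eq_norm]
    refine (Complex.norm_le_abs_re_add_abs_im _).trans ?_
    simp only [Complex.sub_re, Complex.sub_im, Complex.ofReal_re, Complex.ofReal_im, sub_zero]
    rw [abs_of_nonneg (by linarith), abs_of_neg z3]
    have := le_abs_self M
    simp only [r]; linarith) (fun z hz => hz.2.2.2)
  refine ⟨⟨a, hc0⟩, key.1, ?_⟩
  have hl2 : 0 < Real.log 2 := Real.log_pos (by norm_num)
  have hJ : (Jcount κ η f a b : ℝ) ≤ Real.log (C * Real.exp (K / f) / ‖Df κ η f a‖) / Real.log 2 := key.2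
  have hlog : Real.log (C * Real.exp (K / f) / ‖Df κ η f a‖) ≤ |Real.log (C / m)| + K / f := by
    calc _ ≤ Real.log (C * Real.exp (K / f) / m) := by
          apply Real.log_le_log
          · have := norm_pos_iff.2 hc0
            positivity
          · gcongr
      _ = Real.log (C / m) + K / f := by
          rw [show C * Real.exp (K / f) / m = C / m * Real.exp (K / f) by ring, Real.log_mul (by positivity) (by positivity), Real.log_exp]
      _ ≤ _ := by have := le_abs_self (Real.log (C / m)); linarith
  calc f * (Jcount κ η f a b : ℝ) ≤ f * ((|Real.log (C / m)| + K / f) / Real.log 2) := by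
        gcongr; exact hJ.trans (by gcongr)
    _ = (f * |Real.log (C / m)| + K) / Real.log 2 := by field_simp
    _ ≤ _ := by
        gcongr
        have := abs_nonneg (Real.log (C / m))
        nlinarith

/-- Resonance counting below a segment `[a, b]` with `0 < a < b/2`:
`J(f)` is finite for small `f > 0`, and
`0 < liminf_{f→0⁺} f·J(f) ≤ limsup_{f→0⁺} f·J(f) < ∞`. -/
theorem stmt12 (κ η a b : ℝ) (hκ : 0 < κ) (hη : 0 < η)
    (ha : 0 < a) (hab : a < b / 2) :
    (∃ f₁ > (0 : ℝ), ∀ f : ℝ, 0 < f → f < f₁ →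
      {z : ℂ | a ≤ z.re ∧ z.re ≤ b ∧ z.im < 0 ∧ Df κ η f z = 0}.Finite) ∧
    0 < Filter.liminf (fun f : ℝ => ENNReal.ofReal f * (Jcount κ η f a b : ℝ≥0∞))
        (nhdsWithin 0 (Set.Ioi 0)) ∧
    Filter.liminf (fun f : ℝ => ENNReal.ofReal f * (Jcount κ η f a b : ℝ≥0∞))
        (nhdsWithin 0 (Set.Ioi 0)) ≤
      Filter.limsup (fun f : ℝ => ENNReal.ofReal f * (Jcount κ η f a b : ℝ≥0∞))
        (nhdsWithin 0 (Set.Ioi 0)) ∧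
    Filter.limsup (fun f : ℝ => ENNReal.ofReal f * (Jcount κ η f a b : ℝ≥0∞))
        (nhdsWithin 0 (Set.Ioi 0)) < ⊤ := by
  have hab' : a < b := by linarith
  obtain ⟨C, f0, hf0, hup⟩ := upper_count hκ hη ha hab'
  obtain ⟨c, hc, f1, hf1, hlow⟩ := lower_count hκ hη ha hab'
  have heq : ∀ f : ℝ, 0 < f → ENNReal.ofReal f * (Jcount κ η f a b : ℝ≥0∞) = ENNReal.ofReal (f * (Jcount κ η f a b : ℝ)) := by
    intro f hf
    rw [ENNReal.ofReal_mul hf.le, ENNReal.ofReal_natCast]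
  refine ⟨⟨f0, hf0, fun f hf hff => (hup f hf hff).2.1⟩, ?_, ?_, ?_⟩
  · refine lt_of_lt_of_le (b := ENNReal.ofReal c) (ENNReal.ofReal_pos.2 hc) ?_
    apply Filter.le_liminf_of_le
    · isBoundedDefault
    · filter_upwards [Ioo_mem_nhdsGT (show (0:ℝ) < min f0 f1 by positivity)] with f hf
      rw [heq f hf.1]
      apply ENNReal.ofReal_le_ofReal
      obtain ⟨⟨d, hd⟩, hfin, -⟩ := hup f hf.1 (hf.2.trans_le (min_le_left _ _))
      obtain ⟨S, hS, hcS⟩ := hlow f hf.1 (hf.2.trans_le (min_le_right _ _))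
      refine hcS.trans ?_
      have hf' := hf.1
      gcongr
      rw [Jcount, finsum_mem_eq_finite_toFinset_sum _ hfin]
      calc S.card ≤ hfin.toFinset.card := Finset.card_le_card (by
              intro z hz; rw [Set.Finite.mem_toFinset]; exact hS hz)
        _ = ∑ z ∈ hfin.toFinset, 1 := by simp
        _ ≤ _ := by
          apply Finset.sum_le_sum
          intro z hz
          rw [Set.Finite.mem_toFinset] at hz
          exact vo_pos (Df_differentiable κ η f) hd hz.2.2.2
  · exact Filter.liminf_le_limsup
  · refine lt_of_le_of_lt (b := ENNReal.ofReal C) ?_ ENNReal.ofReal_lt_top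
    apply Filter.limsup_le_of_le
    · isBoundedDefault
    · filter_upwards [Ioo_mem_nhdsGT hf0] with f hf
      rw [heq f hf.1]
      exact ENNReal.ofReal_le_ofReal (hup f hf.1 hf.2).2.2
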